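/- Let S ⊆ {-1,0,1}^d \ {0} be a mostly symmetric step set with negative drift (B(1) - A(1) < 0) that takes a step forwards and backwards in each coordinate. Set ρ = √(A(1)/B(1)) and C_ρ = [S(1,…,1,ρ)·ρ / (2 π^{d/2} A(1) (1 - 1/ρ)^2)] · √( S(1,…,1,ρ)^d / (ρ · B_1(1,…,1,ρ) ··· B_{d-1}(1,…,1,ρ) · B(1)) ), and let C_{-ρ} be obtained from C_ρ by replacing ρ with -ρ. If Q(ẑ) ≠ 0 (there are steps with d-th coordinate 0), then s_n = S(1,…,1,ρ)^n · n^{-d/2-1} · C_ρ · (1 + O(1/n)). If Q(ẑ) = 0, then s_n = n^{-d/2-1} · [ S(1,…,1,ρ)^n · C_ρ + S(1,…,1,-ρ)^n · C_{-ρ} ] · (1 + O(1/n)). -/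

import Mathlib

open Finset Filter
open scoped Classical

noncomputable section

/-- Total weight of walks of length `n` with steps in `S` (weighted by `w`),
starting at the origin and never leaving `ℕ^d`. -/
def walkWeight (d : ℕ) (S : Finset (Fin d → ℤ)) (w : (Fin d → ℤ) → ℝ) (n : ℕ) : ℝ :=
  ∑ f : Fin n → {i // i ∈ S},
    if ∀ m : ℕ, m ≤ n → ∀ j : Fin d,
        0 ≤ ∑ k ∈ Finset.univ.filter (fun k : Fin n => (k : ℕ) < m), ((f k : Fin d → ℤ) j)
    then ∏ k : Fin n, w (f k) else 0

/-- The step set `S` (with weights `w`) is symmetric over the `k`-th coordinate axis. -/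
def SymmetricAxis (d : ℕ) (S : Finset (Fin d → ℤ)) (w : (Fin d → ℤ) → ℝ) (k : Fin d) : Prop :=
  ∀ i ∈ S, Function.update i k (-(i k)) ∈ S ∧ w (Function.update i k (-(i k))) = w i

/-- `S(1,…,1,r)`: the characteristic polynomial evaluated with the first `d`
coordinates equal to `1` and the last coordinate equal to `r`. -/
def SAt (d : ℕ) (S : Finset (Fin (d + 1) → ℤ)) (w : (Fin (d + 1) → ℤ) → ℝ) (r : ℝ) : ℝ :=
  ∑ i ∈ S, w i * r ^ (i (Fin.last d))

/-- `B_k(1,…,1,r)`: the coefficient `[z_k] S(z)` evaluated with the remaining first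
`d` coordinates equal to `1` and the last coordinate equal to `r`. -/
def BkAt (d : ℕ) (S : Finset (Fin (d + 1) → ℤ)) (w : (Fin (d + 1) → ℤ) → ℝ)
    (k : Fin d) (r : ℝ) : ℝ :=
  ∑ i ∈ S.filter fun i => i (Fin.castSucc k) = 1, w i * r ^ (i (Fin.last d))

/-- The constant `C_ρ` of the negative drift asymptotics (with `ρ` replaced by `r`),
for a mostly symmetric step set in dimension `d+1`. -/
def Cconst (d : ℕ) (S : Finset (Fin (d + 1) → ℤ)) (w : (Fin (d + 1) → ℤ) → ℝ) (r : ℝ) : ℝ :=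
  (SAt d S w r * r /
      (2 * Real.pi ^ (((d : ℝ) + 1) / 2) *
        (∑ i ∈ S.filter fun i => i (Fin.last d) = -1, w i) * (1 - 1 / r) ^ 2)) *
    Real.sqrt (SAt d S w r ^ (d + 1) /
      (r * (∏ k : Fin d, BkAt d S w k r) *
        ∑ i ∈ S.filter fun i => i (Fin.last d) = 1, w i))

/-!
On a symmetric axis the step polynomial depends on `z_k` only through `y_k = (z_k + 1 / z_k) / 2`,
and the three term recursion of the Chebyshev polynomials `U` diagonalizes the steps along that
axis. Hence the weight of the walks is the integral over the cube `[-1, 1] ^ d` of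
`∏ k, (1 + y_k)`, against the product of the arcsine measures `dy_k / √(1 - y_k ^ 2)`, times the
weight of the walks on the half-line with step weights `A(y)`, `Q(y)`, `B(y)`. With
`σ = √(B / A)`, which is less than `1` near the corner `y = 1` because the drift is negative, this
last weight is in turn a Chebyshev integral of
`(Q + 2 * √(A * B) * z) ^ n * (1 - z ^ 2) / (1 - 2 * σ * z + σ ^ 2)`.

The maximal growth rate is attained for `y = 1` at `z = 1` and, when `Q = 0`, also at `z = -1`,
which is the source of the term with `-ρ`. Other corners of the cube may have the same growth rate,
but their contribution is of lower order since `1 + y_k` vanishes at `y_k = -1`. Laplace's method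
with error terms `O(n ^ (-k) * exp (-c * n * u))`, uniform in the distance `u` to the corner,
reduces each remaining contribution to a product of one-dimensional integrals that are Gaussian up
to a relative error `O(1 / n)`.
-/
section Walks

variable {d : ℕ} (S : Finset (Fin d → ℤ)) (w : (Fin d → ℤ) → ℝ)

/-- The analogue of `walkWeight` for walks starting at `x`; it satisfies a recursion obtained by
removing the first step. -/
def walkWeightFrom (n : ℕ) (x : Fin d → ℤ) : ℝ :=
  ∑ f : Fin n → {i // i ∈ S},
    if ∀ m ≤ n, ∀ j, 0 ≤ x j + ∑ k ∈ univ.filter fun k : Fin n => (k : ℕ) < m, (f k : Fin d → ℤ) j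
    then ∏ k : Fin n, w (f k) else 0

theorem walkWeight_eq_walkWeightFrom_zero (n : ℕ) :
    walkWeight d S w n = walkWeightFrom S w n 0 := by
  simp only [walkWeight, walkWeightFrom, Pi.zero_apply, zero_add]

variable {S w}

theorem sum_filter_cons_lt_succ {n : ℕ} (a : S) (g : Fin n → S) (m : ℕ) (j : Fin d) :
    ∑ k ∈ univ.filter fun k : Fin (n + 1) => (k : ℕ) < m + 1,
        ((Fin.cons a g : Fin (n + 1) → S) k : Fin d → ℤ) j =
      a.1 j + ∑ k ∈ univ.filter fun k : Fin n => (k : ℕ) < m, (g k : Fin d → ℤ) j := by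
  rw [sum_filter, sum_filter, Fin.sum_univ_succ]
  simp

theorem forall_le_succ_partial_sum_cons_nonneg_iff {n : ℕ} (x : Fin d → ℤ) (a : S)
    (g : Fin n → S) :
    (∀ m ≤ n + 1, ∀ j, 0 ≤ x j + ∑ k ∈ univ.filter fun k : Fin (n + 1) => (k : ℕ) < m,
        ((Fin.cons a g : Fin (n + 1) → S) k : Fin d → ℤ) j) ↔
      (∀ j, 0 ≤ x j) ∧ ∀ m ≤ n, ∀ j,
        0 ≤ (x + a.1) j + ∑ k ∈ univ.filter fun k : Fin n => (k : ℕ) < m,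
          (g k : Fin d → ℤ) j := by
  constructor
  · refine fun h => ⟨fun j => by simpa using h 0 (Nat.zero_le _) j, fun m hm j => ?_⟩
    simpa only [sum_filter_cons_lt_succ, Pi.add_apply, add_assoc] using
      h (m + 1) (Nat.succ_le_succ hm) j
  · rintro ⟨h0, h⟩ (_ | m) hm j
    · simpa using h0 j
    · simpa only [sum_filter_cons_lt_succ, Pi.add_apply, add_assoc] using
        h m (Nat.le_of_succ_le_succ hm) j

theorem walkWeightFrom_zero {x : Fin d → ℤ} (hx : ∀ j, 0 ≤ x j) : walkWeightFrom S w 0 x = 1 := by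
  simp [walkWeightFrom, hx]

theorem walkWeightFrom_of_neg {x : Fin d → ℤ} {j : Fin d} (hx : x j < 0) (n : ℕ) :
    walkWeightFrom S w n x = 0 :=
  sum_eq_zero fun _ _ => if_neg fun h => hx.not_ge (by simpa using h 0 n.zero_le j)

theorem walkWeightFrom_succ {x : Fin d → ℤ} (hx : ∀ j, 0 ≤ x j) (n : ℕ) :
    walkWeightFrom S w (n + 1) x = ∑ i ∈ S, w i * walkWeightFrom S w n (x + i) := by
  rw [walkWeightFrom, ← (Fin.consEquiv fun _ : Fin (n + 1) => {i // i ∈ S}).sum_comp,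
    Fintype.sum_prod_type, ← sum_coe_sort S]
  refine sum_congr rfl fun a _ => ?_
  rw [walkWeightFrom, mul_sum]
  refine sum_congr rfl fun g _ => ?_
  have cons_eq : Fin.consEquiv (fun _ : Fin (n + 1) => {i // i ∈ S}) (a, g) = Fin.cons a g := rfl
  rw [cons_eq, if_congr (forall_le_succ_partial_sum_cons_nonneg_iff x a g) rfl rfl]
  simp only [hx, implies_true, true_and, Fin.prod_univ_succ, Fin.cons_zero, Fin.cons_succ,
    mul_ite, mul_zero]

end Walks

section HalfLine

/-- The total weight of the `n`-step walks on `ℤ` that start at `y` and stay in `ℕ`, where the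
steps `-1`, `0`, `1` have weights `a`, `q`, `b`. -/
def halfLineWeight (a q b : ℝ) : ℕ → ℤ → ℝ
  | 0, y => if 0 ≤ y then 1 else 0
  | n + 1, y =>
    if 0 ≤ y then
      a * halfLineWeight a q b n (y - 1) + q * halfLineWeight a q b n y +
        b * halfLineWeight a q b n (y + 1)
    else 0

variable {a q b : ℝ}

theorem halfLineWeight_of_neg {y : ℤ} (hy : y < 0) (n : ℕ) : halfLineWeight a q b n y = 0 := by
  cases n <;> simp [halfLineWeight, hy.not_ge]

theorem halfLineWeight_succ {y : ℤ} (hy : 0 ≤ y) (n : ℕ) :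
    halfLineWeight a q b (n + 1) y =
      a * halfLineWeight a q b n (y - 1) + q * halfLineWeight a q b n y +
        b * halfLineWeight a q b n (y + 1) :=
  if_pos hy

theorem abs_halfLineWeight_le {a' q' b' : ℝ} (ha : |a| ≤ a') (hq : |q| ≤ q') (hb : |b| ≤ b')
    (n : ℕ) (y : ℤ) : |halfLineWeight a q b n y| ≤ halfLineWeight a' q' b' n y := by
  induction n generalizing y with
  | zero => simp only [halfLineWeight]; split_ifs <;> simp
  | succ n ih =>
    rcases lt_or_ge y 0 with hy | hy
    · simp [halfLineWeight_of_neg hy]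
    · have abs_mul_le {c c' : ℝ} (hc : |c| ≤ c') (z : ℤ) :
          |c * halfLineWeight a q b n z| ≤ c' * halfLineWeight a' q' b' n z := by
        rw [abs_mul]
        exact mul_le_mul hc (ih z) (abs_nonneg _) ((abs_nonneg _).trans hc)
      rw [halfLineWeight_succ hy, halfLineWeight_succ hy]
      exact (abs_add_three _ _ _).trans
        (add_le_add_three (abs_mul_le ha _) (abs_mul_le hq _) (abs_mul_le hb _))

theorem halfLineWeight_le_pow_mul_zpow {r : ℝ} (ha : 0 ≤ a) (hq : 0 ≤ q) (hb : 0 ≤ b)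
    (hr : 1 ≤ r) (n : ℕ) (y : ℤ) :
    halfLineWeight a q b n y ≤ (q + a / r + b * r) ^ n * r ^ y := by
  have hr0 : 0 < r := one_pos.trans_le hr
  induction n generalizing y with
  | zero =>
    simp only [halfLineWeight, pow_zero, one_mul]
    split_ifs with hy
    · exact one_le_zpow₀ hr hy
    · positivity
  | succ n ih =>
    rcases lt_or_ge y 0 with hy | hy
    · rw [halfLineWeight_of_neg hy]
      positivity
    · rw [halfLineWeight_succ hy]
      calc a * halfLineWeight a q b n (y - 1) + q * halfLineWeight a q b n y +
              b * halfLineWeight a q b n (y + 1)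
          ≤ a * ((q + a / r + b * r) ^ n * r ^ (y - 1)) + q * ((q + a / r + b * r) ^ n * r ^ y) +
              b * ((q + a / r + b * r) ^ n * r ^ (y + 1)) := by gcongr <;> exact ih _
        _ = (q + a / r + b * r) ^ (n + 1) * r ^ y := by
            rw [zpow_sub_one₀ hr0.ne', zpow_add_one₀ hr0.ne', pow_succ]
            ring

theorem continuous_halfLineWeight {X : Type*} [TopologicalSpace X] {a q b : X → ℝ}
    (ha : Continuous a) (hq : Continuous q) (hb : Continuous b) (n : ℕ) (y : ℤ) :
    Continuous fun x => halfLineWeight (a x) (q x) (b x) n y := by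
  induction n generalizing y with
  | zero => exact continuous_const
  | succ n ih =>
    simp only [halfLineWeight]
    split_ifs
    · exact ((ha.mul (ih _)).add (hq.mul (ih _))).add (hb.mul (ih _))
    · exact continuous_const

end HalfLine

section ChebyshevIntegrals

open MeasureTheory Polynomial Polynomial.Chebyshev

theorem measureT_ae_mem_Icc : ∀ᵐ z ∂measureT, z ∈ Set.Icc (-1 : ℝ) 1 :=
  (ae_restrict_mem measurableSet_Ioc).mono fun _ hz => Set.Ioc_subset_Icc_self hz

instance isFiniteMeasure_measureT : IsFiniteMeasure measureT :=
  (integrable_const_iff_isFiniteMeasure one_ne_zero).mp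
    (integrable_measureT (f := fun _ => (1 : ℝ)) continuousOn_const)

theorem one_add_mul_U_succ (n : ℤ) (z : ℝ) :
    (1 + z) * (U ℝ (n + 1)).eval z =
      (1 + z) * (U ℝ n).eval z + ((T ℝ (n + 2)).eval z + (T ℝ (n + 1)).eval z) := by
  have hT := congrArg (eval z) (T_eq_X_mul_U_sub_U ℝ n)
  have hU := congrArg (eval z) (U_eq_X_mul_U_add_T ℝ n)
  simp only [eval_add, eval_sub, eval_mul, eval_X] at hT hU
  linear_combination hU - hT

theorem integral_one_add_mul_U (n : ℕ) :
    ∫ z, (1 + z) * (U ℝ n).eval z ∂measureT = Real.pi := by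
  induction n with
  | zero =>
    have split (z : ℝ) : (1 + z) * (U ℝ (0 : ℕ)).eval z = (T ℝ 0).eval z + (T ℝ 1).eval z := by simp
    simp only [split]
    rw [integral_add (integrable_measureT (by fun_prop)) (integrable_measureT (by fun_prop)),
      integral_eval_T_real_measureT_zero, integral_eval_T_real_measureT_of_ne_zero one_ne_zero,
      add_zero]
  | succ n ih =>
    simp only [Nat.cast_succ, one_add_mul_U_succ]
    rw [integral_add (integrable_measureT (by fun_prop)) (integrable_measureT (by fun_prop)),
      integral_add (integrable_measureT (by fun_prop)) (integrable_measureT (by fun_prop)), ih,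
      integral_eval_T_real_measureT_of_ne_zero (by lia),
      integral_eval_T_real_measureT_of_ne_zero (by lia), add_zero, add_zero]

theorem one_sub_sq_mul_U_mul_U_cos (m n : ℤ) (θ : ℝ) :
    (1 - Real.cos θ ^ 2) * (U ℝ m).eval (Real.cos θ) * (U ℝ n).eval (Real.cos θ) =
      Real.sin ((m + 1) * θ) * Real.sin ((n + 1) * θ) := by
  rw [← Real.sin_sq, ← U_real_cos, ← U_real_cos]
  ring

theorem abs_one_sub_sq_mul_U_mul_U_le_one (m n : ℤ) {z : ℝ} (hz : z ∈ Set.Icc (-1) 1) :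
    |(1 - z ^ 2) * (U ℝ m).eval z * (U ℝ n).eval z| ≤ 1 := by
  rw [← Real.cos_arccos hz.1 hz.2, one_sub_sq_mul_U_mul_U_cos, abs_mul]
  exact mul_le_one₀ (Real.abs_sin_le_one _) (abs_nonneg _) (Real.abs_sin_le_one _)

theorem integral_one_sub_sq_mul_U_mul_U (m n : ℕ) :
    ∫ z, (1 - z ^ 2) * (U ℝ m).eval z * (U ℝ n).eval z ∂measureT =
      if m = n then Real.pi / 2 else 0 := by
  have product_formula (θ : ℝ) :
      (1 - Real.cos θ ^ 2) * (U ℝ m).eval (Real.cos θ) * (U ℝ n).eval (Real.cos θ) =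
        ((T ℝ (m - n)).eval (Real.cos θ) - (T ℝ (m + n + 2)).eval (Real.cos θ)) / 2 := by
    rw [one_sub_sq_mul_U_mul_U_cos, T_real_cos, T_real_cos,
      eq_div_iff two_ne_zero, mul_comm _ (2 : ℝ), ← mul_assoc, Real.two_mul_sin_mul_sin]
    push_cast
    ring_nf
  rw [integral_measureT_eq_integral_cos]
  simp only [product_formula]
  rw [← integral_measureT_eq_integral_cos
      (f := fun z => ((T ℝ (m - n)).eval z - (T ℝ (m + n + 2)).eval z) / 2), integral_div,
    integral_sub (integrable_measureT (by fun_prop)) (integrable_measureT (by fun_prop)),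
    integral_eval_T_real_measureT_of_ne_zero (n := m + n + 2) (by lia), sub_zero]
  split_ifs with hmn
  · rw [hmn, sub_self, integral_eval_T_real_measureT_zero]
  · rw [integral_eval_T_real_measureT_of_ne_zero (by lia), zero_div]

/-- The kernel `(1 - z²) / (1 - 2σz + σ²)`. Up to the factor `1 - z²` it is the generating
function, with variable `σ`, of the Chebyshev polynomials of the second kind. -/
def halfLineKernel (σ z : ℝ) : ℝ := (1 - z ^ 2) / (1 - 2 * σ * z + σ ^ 2)

theorem one_sub_abs_sq_le_halfLineKernel_denom {σ z : ℝ} (hz : z ∈ Set.Icc (-1) 1) :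
    (1 - |σ|) ^ 2 ≤ 1 - 2 * σ * z + σ ^ 2 := by
  have : σ * z ≤ |σ| := (le_abs_self _).trans <| by
    rw [abs_mul]
    exact mul_le_of_le_one_right (abs_nonneg _) (abs_le.mpr hz)
  nlinarith [sq_abs σ]

theorem halfLineKernel_denom_pos {σ z : ℝ} (hσ : |σ| < 1) (hz : z ∈ Set.Icc (-1) 1) :
    0 < 1 - 2 * σ * z + σ ^ 2 :=
  (pow_pos (sub_pos.mpr hσ) 2).trans_le (one_sub_abs_sq_le_halfLineKernel_denom hz)

theorem halfLineKernel_neg (σ z : ℝ) : halfLineKernel (-σ) (-z) = halfLineKernel σ z := by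
  simp only [halfLineKernel, neg_sq, mul_neg, neg_mul, neg_neg]

theorem continuousOn_halfLineKernel {σ : ℝ} (hσ : |σ| < 1) :
    ContinuousOn (halfLineKernel σ) (Set.Icc (-1) 1) :=
  ContinuousOn.div (by fun_prop) (by fun_prop) fun _ hz => (halfLineKernel_denom_pos hσ hz).ne'

theorem hasSum_pow_mul_U_halfLineKernel {σ z : ℝ} (hσ : |σ| < 1) (hz : z ∈ Set.Icc (-1) 1) :
    HasSum (fun m : ℕ => σ ^ m * ((1 - z ^ 2) * (U ℝ m).eval z)) (halfLineKernel σ z) := by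
  set f : ℕ → ℝ := fun m => σ ^ m * ((1 - z ^ 2) * (U ℝ m).eval z) with hf
  have summable_f : Summable f :=
    .of_norm_bounded (summable_geometric_of_abs_lt_one hσ |>.norm) fun m => by
      rw [norm_mul]
      refine mul_le_of_le_one_right (norm_nonneg _) ?_
      simpa using abs_one_sub_sq_mul_U_mul_U_le_one m 0 hz
  obtain ⟨s, hs⟩ := summable_f
  have recurrence (m : ℕ) : f (m + 2) = 2 * σ * z * f (m + 1) - σ ^ 2 * f m := by
    have := congrArg (eval z) (U_add_two ℝ m)
    simp only [eval_sub, eval_mul, eval_X, eval_ofNat] at this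
    simp only [hf, Nat.cast_add, Nat.cast_ofNat, Nat.cast_one, this]
    ring
  have hs_shift : HasSum (fun m => f (m + 1)) (s - f 0) := by
    simpa using (hasSum_nat_add_iff' 1).mpr hs
  have hs_shift_two : HasSum (fun m => f (m + 2)) (s - (f 0 + f 1)) := by
    simpa [sum_range_succ] using (hasSum_nat_add_iff' 2).mpr hs
  simp only [recurrence] at hs_shift_two
  have hs_eq := hs_shift_two.unique ((hs_shift.mul_left _).sub (hs.mul_left _))
  have f_zero : f 0 = 1 - z ^ 2 := by simp [hf]
  have f_one : f 1 = σ * ((1 - z ^ 2) * (2 * z)) := by simp [hf]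
  rw [f_zero, f_one] at hs_eq
  convert! hs using 1
  rw [halfLineKernel, div_eq_iff (halfLineKernel_denom_pos hσ hz).ne']
  linear_combination -hs_eq

theorem integral_U_mul_halfLineKernel {σ : ℝ} (hσ : |σ| < 1) (n : ℕ) :
    ∫ z, (U ℝ n).eval z * halfLineKernel σ z ∂measureT = Real.pi / 2 * σ ^ n := by
  set F : ℕ → ℝ → ℝ := fun m z => σ ^ m * ((1 - z ^ 2) * (U ℝ m).eval z * (U ℝ n).eval z)
  have hsum : HasSum (fun m => ∫ z, F m z ∂measureT)
      (∫ z, (U ℝ n).eval z * halfLineKernel σ z ∂measureT) := by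
    refine hasSum_integral_of_dominated_convergence (fun m _ => |σ| ^ m)
      (fun m => (by fun_prop : Continuous (F m)).aestronglyMeasurable) (fun m => ?_)
      (.of_forall fun _ => summable_geometric_of_lt_one (abs_nonneg σ) hσ)
      (integrable_const _) ?_
    · filter_upwards [measureT_ae_mem_Icc] with z hz
      rw [Real.norm_eq_abs, abs_mul, abs_pow]
      exact mul_le_of_le_one_right (by positivity) (abs_one_sub_sq_mul_U_mul_U_le_one m n hz)
    · filter_upwards [measureT_ae_mem_Icc] with z hz
      convert! (hasSum_pow_mul_U_halfLineKernel hσ hz).mul_left ((U ℝ n).eval z) using 2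
      ring
  have integral_F (m : ℕ) : ∫ z, F m z ∂measureT = if m = n then Real.pi / 2 * σ ^ n else 0 := by
    rw [integral_const_mul, integral_one_sub_sq_mul_U_mul_U]
    split_ifs with hmn
    · rw [hmn, mul_comm]
    · rw [mul_zero]
  simp only [integral_F] at hsum
  exact hsum.unique (hasSum_ite_eq n _)

theorem halfLineWeight_eq_integral_U {p q σ : ℝ} (hσ0 : 0 < σ) (hσ1 : σ < 1) (n : ℕ) {y : ℤ}
    (hy : -1 ≤ y) :
    halfLineWeight (p / σ) q (p * σ) n y =
      2 / Real.pi * σ ^ (-y) *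
        ∫ z, (q + 2 * p * z) ^ n * ((U ℝ y).eval z * halfLineKernel σ z) ∂measureT := by
  have hσ : |σ| < 1 := by rwa [abs_of_pos hσ0]
  induction n generalizing y with
  | zero =>
    obtain rfl | hy := hy.eq_or_lt
    · simp [halfLineWeight]
    · lift y to ℕ using by lia
      simp only [halfLineWeight, Int.natCast_nonneg, if_true, pow_zero, one_mul,
        integral_U_mul_halfLineKernel hσ, zpow_neg, zpow_natCast]
      field_simp
  | succ n ih =>
    obtain rfl | hy := hy.eq_or_lt
    · simp [halfLineWeight]
    have integrable (x : ℤ) : Integrable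
        (fun z => (q + 2 * p * z) ^ n * ((U ℝ x).eval z * halfLineKernel σ z)) measureT :=
      integrable_measureT
        (.mul (by fun_prop) (.mul (by fun_prop) (continuousOn_halfLineKernel hσ)))
    have expand (z : ℝ) : (q + 2 * p * z) ^ (n + 1) * ((U ℝ y).eval z * halfLineKernel σ z) =
        p * ((q + 2 * p * z) ^ n * ((U ℝ (y - 1)).eval z * halfLineKernel σ z)) +
          q * ((q + 2 * p * z) ^ n * ((U ℝ y).eval z * halfLineKernel σ z)) +
          p * ((q + 2 * p * z) ^ n * ((U ℝ (y + 1)).eval z * halfLineKernel σ z)) := by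
      have hU := congrArg (eval z) (U_add_one ℝ y)
      simp only [eval_sub, eval_mul, eval_X, eval_ofNat] at hU
      rw [hU]
      ring
    simp only [expand]
    rw [integral_add (((integrable _).const_mul p).fun_add ((integrable _).const_mul q))
        ((integrable _).const_mul p), integral_add ((integrable _).const_mul p)
        ((integrable _).const_mul q), integral_const_mul, integral_const_mul, integral_const_mul,
      halfLineWeight_succ (by lia), ih (by lia), ih (by lia), ih (by lia),
      neg_sub, neg_add', sub_eq_add_neg (1 : ℤ), zpow_add₀ hσ0.ne', zpow_sub_one₀ hσ0.ne', zpow_one]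
    field_simp

theorem halfLineWeight_zero_eq_integral {p q σ : ℝ} (hσ0 : 0 < σ) (hσ1 : σ < 1) (n : ℕ) :
    halfLineWeight (p / σ) q (p * σ) n 0 =
      2 / Real.pi * ∫ z, (q + 2 * p * z) ^ n * halfLineKernel σ z ∂measureT := by
  simpa using halfLineWeight_eq_integral_U (p := p) (q := q) hσ0 hσ1 n (y := 0) (by lia)

end ChebyshevIntegrals

section Symmetrization

theorem sum_mul_comp_apply_eq_of_symmetricAxis {m : ℕ} {S : Finset (Fin m → ℤ)}
    {w : (Fin m → ℤ) → ℝ} {k : Fin m} (hsym : SymmetricAxis m S w k) {Φ : (Fin m → ℤ) → ℝ}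
    (hΦ : ∀ i, Φ (Function.update i k (-(i k))) = Φ i) {f g : ℤ → ℝ}
    (hfg : ∀ i ∈ S, f (i k) + f (-(i k)) = g (i k) + g (-(i k))) :
    ∑ i ∈ S, w i * (f (i k) * Φ i) = ∑ i ∈ S, w i * (g (i k) * Φ i) := by
  have flip_sum (h : ℤ → ℝ) :
      ∑ i ∈ S, w i * (h (i k) * Φ i) = ∑ i ∈ S, w i * (h (-(i k)) * Φ i) := by
    refine sum_nbij' (fun i => Function.update i k (-(i k)))
      (fun i => Function.update i k (-(i k))) (fun i hi => (hsym i hi).1)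
      (fun i hi => (hsym i hi).1) (by simp) (by simp) fun i hi => ?_
    rw [(hsym i hi).2, hΦ, Function.update_self, neg_neg]
  have double (h : ℤ → ℝ) : 2 * ∑ i ∈ S, w i * (h (i k) * Φ i) =
      ∑ i ∈ S, w i * ((h (i k) + h (-(i k))) * Φ i) := by
    rw [two_mul]
    nth_rw 2 [flip_sum]
    simp only [← sum_add_distrib, add_mul, mul_add]
  refine mul_left_cancel₀ two_ne_zero ((double f).trans (Eq.trans ?_ (double g).symm))
  exact sum_congr rfl fun i hi => by rw [hfg i hi]

variable {d : ℕ} {S : Finset (Fin (d + 1) → ℤ)} {w : (Fin (d + 1) → ℤ) → ℝ}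

theorem sum_prod_mul_last_congr_of_symmetricAxis
    (hsym : ∀ k : Fin d, SymmetricAxis (d + 1) S w k.castSucc) {F G : Fin d → ℤ → ℝ}
    (hFG : ∀ i ∈ S, ∀ k, F k (i k.castSucc) + F k (-(i k.castSucc)) =
      G k (i k.castSucc) + G k (-(i k.castSucc))) (H : ℤ → ℝ) :
    ∑ i ∈ S, w i * ((∏ k, F k (i k.castSucc)) * H (i (Fin.last d))) =
      ∑ i ∈ S, w i * ((∏ k, G k (i k.castSucc)) * H (i (Fin.last d))) := by
  suffices swap : ∀ T : Finset (Fin d),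
      ∑ i ∈ S, w i * ((∏ k, F k (i k.castSucc)) * H (i (Fin.last d))) =
        ∑ i ∈ S, w i * ((∏ k, T.piecewise G F k (i k.castSucc)) * H (i (Fin.last d))) by
    simpa using swap univ
  intro T
  induction T using Finset.induction_on with
  | empty => simp
  | insert k T hk ih =>
    have update_eq : Function.update (T.piecewise G F) k (F k) = T.piecewise G F := by simp [hk]
    rw [ih, piecewise_insert]
    generalize T.piecewise G F = P at update_eq ⊢
    have isolate (f : ℤ → ℝ) (i : Fin (d + 1) → ℤ) :
        (∏ l, Function.update P k f l (i l.castSucc)) * H (i (Fin.last d)) =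
          f (i k.castSucc) * ((∏ l ∈ univ.erase k, P l (i l.castSucc)) * H (i (Fin.last d))) := by
      rw [← mul_prod_erase univ _ (mem_univ k), Function.update_self, mul_assoc]
      congr 2
      exact prod_congr rfl fun l hl => by rw [Function.update_of_ne (ne_of_mem_erase hl)]
    nth_rw 1 [← update_eq]
    simp only [isolate]
    refine sum_mul_comp_apply_eq_of_symmetricAxis (hsym k) (fun i => ?_) fun i hi => hFG i hi k
    congr 1
    · refine prod_congr rfl fun l hl => ?_
      rw [Function.update_of_ne ((Fin.castSucc_injective d).ne (ne_of_mem_erase hl))]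
    · rw [Function.update_of_ne (Fin.castSucc_ne_last k).symm]

end Symmetrization

section ExactFormula

open MeasureTheory Polynomial Polynomial.Chebyshev

variable {d : ℕ} {S : Finset (Fin (d + 1) → ℤ)} {w : (Fin (d + 1) → ℤ) → ℝ}

/-- The product of `d` copies of the arcsine measure. -/
abbrev measureTPi (d : ℕ) : Measure (Fin d → ℝ) := Measure.pi fun _ => measureT

theorem measureTPi_ae_mem_Icc : ∀ᵐ y ∂measureTPi d, y ∈ Set.Icc (-1 : Fin d → ℝ) 1 := by
  simp only [← Set.pi_univ_Icc, Set.mem_univ_pi]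
  exact ae_all_iff.mpr fun _ => Measure.tendsto_eval_ae_ae.eventually measureT_ae_mem_Icc

theorem integrable_measureTPi {f : (Fin d → ℝ) → ℝ} (hf : ContinuousOn f (Set.Icc (-1) 1)) :
    Integrable f (measureTPi d) := by
  rw [← Measure.restrict_eq_self_of_ae_mem (measureTPi_ae_mem_Icc (d := d))]
  exact hf.integrableOn_compact isCompact_Icc

variable (S w) in
/-- The coefficient of `z_d ^ e` in the characteristic polynomial of a step set that is symmetric
over its first axes, as a function of the variables `y k = (z k + (z k)⁻¹) / 2`. -/
def foldedCoeff (e : ℤ) (y : Fin d → ℝ) : ℝ :=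
  ∑ i ∈ S with i (Fin.last d) = e, w i * ∏ k, y k ^ (i k.castSucc).natAbs

variable (S w) in
/-- The total weight of the `n`-step walks on `ℕ` that start at `m`, where the step weights are the
values of `foldedCoeff` at `y`. -/
def foldedWeight (n : ℕ) (m : ℤ) (y : Fin d → ℝ) : ℝ :=
  halfLineWeight (foldedCoeff S w (-1) y) (foldedCoeff S w 0 y) (foldedCoeff S w 1 y) n m

theorem continuous_foldedCoeff (e : ℤ) : Continuous (foldedCoeff S w e) := by
  unfold foldedCoeff
  fun_prop

theorem continuous_foldedWeight (n : ℕ) (m : ℤ) : Continuous (foldedWeight S w n m) :=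
  continuous_halfLineWeight (continuous_foldedCoeff _) (continuous_foldedCoeff _)
    (continuous_foldedCoeff _) n m

theorem sum_mul_prod_pow_mul_last {y : Fin d → ℝ}
    (hstep : ∀ i ∈ S, ∀ j, i j = -1 ∨ i j = 0 ∨ i j = 1) (H : ℤ → ℝ) :
    ∑ i ∈ S, w i * ((∏ k, y k ^ (i k.castSucc).natAbs) * H (i (Fin.last d))) =
      foldedCoeff S w (-1) y * H (-1) + foldedCoeff S w 0 y * H 0 +
        foldedCoeff S w 1 y * H 1 := by
  simp only [foldedCoeff, sum_filter, sum_mul, ← sum_add_distrib]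
  refine sum_congr rfl fun i hi => ?_
  obtain h | h | h := hstep i hi (Fin.last d) <;> simp [h, mul_assoc]

theorem U_add_add_U_sub {j : ℤ} (hj : j = -1 ∨ j = 0 ∨ j = 1) (m : ℤ) (z : ℝ) :
    (U ℝ (m + j)).eval z + (U ℝ (m - j)).eval z =
      z ^ j.natAbs * (U ℝ m).eval z + z ^ j.natAbs * (U ℝ m).eval z := by
  have hU := congrArg (eval z) (U_add_one ℝ m)
  simp only [eval_sub, eval_mul, eval_X, eval_ofNat] at hU
  obtain rfl | rfl | rfl := hj
  · simp only [← sub_eq_add_neg, sub_neg_eq_add, hU, Int.natAbs_neg, Int.natAbs_one, pow_one]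
    ring
  · simp
  · simp only [hU, Int.natAbs_one, pow_one]
    ring

theorem sum_mul_prod_U_mul_foldedWeight
    (hstep : ∀ i ∈ S, ∀ j, i j = -1 ∨ i j = 0 ∨ i j = 1)
    (hsym : ∀ k : Fin d, SymmetricAxis (d + 1) S w k.castSucc) (n : ℕ) {x : Fin (d + 1) → ℤ}
    (hx : 0 ≤ x (Fin.last d)) (y : Fin d → ℝ) :
    ∑ i ∈ S, w i * ((∏ k, (1 + y k) * (U ℝ ((x + i) k.castSucc)).eval (y k)) *
        foldedWeight S w n ((x + i) (Fin.last d)) y) =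
      (∏ k, (1 + y k) * (U ℝ (x k.castSucc)).eval (y k)) *
        foldedWeight S w (n + 1) (x (Fin.last d)) y := by
  have symmetrize := sum_prod_mul_last_congr_of_symmetricAxis hsym
    (F := fun k j => (1 + y k) * (U ℝ (x k.castSucc + j)).eval (y k))
    (G := fun k j => y k ^ j.natAbs * ((1 + y k) * (U ℝ (x k.castSucc)).eval (y k)))
    (fun i hi k => by
      simp only [Int.natAbs_neg, ← sub_eq_add_neg, ← mul_add]
      rw [U_add_add_U_sub (hstep i hi _)]
      ring)
    (fun e => foldedWeight S w n (x (Fin.last d) + e) y)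
  simp only [Pi.add_apply, symmetrize, prod_mul_distrib (f := fun k => y k ^ _), mul_assoc]
  rw [sum_mul_prod_pow_mul_last hstep (fun e =>
      (∏ k, (1 + y k) * (U ℝ (x k.castSucc)).eval (y k)) *
        foldedWeight S w n (x (Fin.last d) + e) y)]
  simp only [foldedWeight, halfLineWeight_succ hx, sub_eq_add_neg, add_zero]
  ring

theorem prod_U_mul_foldedWeight_eq_zero (n : ℕ) {x : Fin (d + 1) → ℤ} {j : Fin (d + 1)}
    (hj : x j = -1) (y : Fin d → ℝ) :
    (∏ k, (1 + y k) * (U ℝ (x k.castSucc)).eval (y k)) * foldedWeight S w n (x (Fin.last d)) y =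
      0 := by
  induction j using Fin.lastCases with
  | last => rw [foldedWeight, halfLineWeight_of_neg (by lia), mul_zero]
  | cast k => rw [prod_eq_zero (mem_univ k) (by simp [hj]), zero_mul]

theorem pi_pow_mul_walkWeightFrom (hstep : ∀ i ∈ S, ∀ j, i j = -1 ∨ i j = 0 ∨ i j = 1)
    (hsym : ∀ k : Fin d, SymmetricAxis (d + 1) S w k.castSucc) (n : ℕ) {x : Fin (d + 1) → ℤ}
    (hx : ∀ j, -1 ≤ x j) :
    Real.pi ^ d * walkWeightFrom S w n x =
      ∫ y, (∏ k, (1 + y k) * (U ℝ (x k.castSucc)).eval (y k)) *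
        foldedWeight S w n (x (Fin.last d)) y ∂measureTPi d := by
  induction n generalizing x with
  | zero =>
    by_cases hx0 : ∀ j, 0 ≤ x j
    · lift x to Fin (d + 1) → ℕ using hx0
      simp only [foldedWeight, halfLineWeight, walkWeightFrom_zero, Int.natCast_nonneg,
        implies_true, if_true, mul_one]
      rw [integral_fintype_prod_eq_prod
        (fun k t => (1 + t) * (U ℝ (x (Fin.castSucc k) : ℤ)).eval t)]
      simp [integral_one_add_mul_U]
    · push Not at hx0
      obtain ⟨j, hj⟩ := hx0
      simp only [walkWeightFrom_of_neg hj, mul_zero,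
        prod_U_mul_foldedWeight_eq_zero 0 (show x j = -1 by linarith [hx j]), integral_zero]
  | succ n ih =>
    by_cases hx0 : ∀ j, 0 ≤ x j
    · simp only [walkWeightFrom_succ hx0,
        ← sum_mul_prod_U_mul_foldedWeight hstep hsym n (hx0 (Fin.last d))]
      rw [integral_finsetSum S fun i _ => integrable_measureTPi ?_, mul_sum]
      · refine sum_congr rfl fun i hi => ?_
        rw [integral_const_mul, ← ih, mul_left_comm]
        intro j
        rw [Pi.add_apply]
        obtain h | h | h := hstep i hi j <;> linarith [hx0 j]
      · have := continuous_foldedWeight (S := S) (w := w) n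
        fun_prop
    · push Not at hx0
      obtain ⟨j, hj⟩ := hx0
      simp only [walkWeightFrom_of_neg hj, mul_zero,
        prod_U_mul_foldedWeight_eq_zero (n + 1) (show x j = -1 by linarith [hx j]), integral_zero]

theorem walkWeight_eq_integral (hstep : ∀ i ∈ S, ∀ j, i j = -1 ∨ i j = 0 ∨ i j = 1)
    (hsym : ∀ k : Fin d, SymmetricAxis (d + 1) S w k.castSucc) (n : ℕ) :
    Real.pi ^ d * walkWeight (d + 1) S w n =
      ∫ y, (∏ k, (1 + y k)) * foldedWeight S w n 0 y ∂measureTPi d := by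
  rw [walkWeight_eq_walkWeightFrom_zero, pi_pow_mul_walkWeightFrom hstep hsym n (by simp)]
  simp

end ExactFormula

section LaplaceBigO

open Asymptotics

theorem pow_mul_exp_neg_le {c t : ℝ} (hc : 0 < c) (ht : 0 ≤ t) (j : ℕ) :
    t ^ j * Real.exp (-(c * t)) ≤ j.factorial / (c / 2) ^ j * Real.exp (-(c / 2 * t)) := by
  have key := Real.pow_div_factorial_le_exp (c / 2 * t) (by positivity) j
  rw [div_le_iff₀ (by positivity), mul_pow] at key
  have split : Real.exp (-(c * t)) = Real.exp (-(c / 2 * t)) * Real.exp (-(c / 2 * t)) := by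
    rw [← Real.exp_add]
    ring_nf
  calc t ^ j * Real.exp (-(c * t))
      = (c / 2) ^ j * t ^ j / (c / 2) ^ j * Real.exp (-(c / 2 * t)) * Real.exp (-(c / 2 * t)) := by
        rw [split]
        field_simp
    _ ≤ Real.exp (c / 2 * t) * j.factorial / (c / 2) ^ j * Real.exp (-(c / 2 * t)) *
          Real.exp (-(c / 2 * t)) := by gcongr
    _ = j.factorial / (c / 2) ^ j * Real.exp (-(c / 2 * t)) := by
        rw [Real.exp_neg]
        field_simp

theorem abs_exp_neg_sub_one_sub_le {t : ℝ} (ht : 0 ≤ t) : |Real.exp (-t) - (1 - t)| ≤ t ^ 2 := by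
  rcases le_total t 1 with ht1 | ht1
  · have := Real.abs_exp_sub_one_sub_id_le (x := -t) (by rwa [abs_neg, abs_of_nonneg ht])
    rwa [neg_sq, sub_sub, ← sub_eq_add_neg] at this
  · rw [abs_of_nonneg (sub_nonneg.mpr (Real.one_sub_le_exp_neg t))]
    nlinarith [Real.exp_le_one_iff.mpr (neg_nonpos.mpr ht)]

variable {X Y : Type*} {G : Filter X} {u v : X → ℝ} {k : ℝ} {f g : ℕ → X → ℝ}

theorem exp_neg_sub_one_sub_isBigO (hu : ∀ᶠ x in G, 0 ≤ u x) :
    (fun x => Real.exp (-u x) - (1 - u x)) =O[G] fun x => u x ^ 2 := by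
  refine .of_bound 1 ?_
  filter_upwards [hu] with x hx
  rw [one_mul, Real.norm_eq_abs, Real.norm_of_nonneg (sq_nonneg _)]
  exact abs_exp_neg_sub_one_sub_le hx

/-- `f n x = O(n ^ (-k) * exp (-c * n * u x))` for some `c > 0`, uniformly in `n ≥ 1` and in `x`
along the filter `G`. These are the error terms of Laplace's method for a phase of size `u`. -/
def IsLaplaceBigO (G : Filter X) (u : X → ℝ) (k : ℝ) (f : ℕ → X → ℝ) : Prop :=
  ∃ c > 0, ∃ C ≥ 0, ∀ᶠ x in G, ∀ n : ℕ, 1 ≤ n →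
    |f n x| ≤ C * ((n : ℝ) ^ (-k) * Real.exp (-(c * (n * u x))))

namespace IsLaplaceBigO

theorem of_abs_le (hg : IsLaplaceBigO G u k g)
    (hfg : ∀ᶠ x in G, ∀ n : ℕ, 1 ≤ n → |f n x| ≤ |g n x|) : IsLaplaceBigO G u k f := by
  obtain ⟨c, hc, C, hC, h⟩ := hg
  exact ⟨c, hc, C, hC, by
    filter_upwards [h, hfg] with x hx hfgx n hn using (hfgx n hn).trans (hx n hn)⟩

theorem add (hu : ∀ᶠ x in G, 0 ≤ u x) (hf : IsLaplaceBigO G u k f) (hg : IsLaplaceBigO G u k g) :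
    IsLaplaceBigO G u k fun n x => f n x + g n x := by
  obtain ⟨c, hc, C, hC, hf⟩ := hf
  obtain ⟨c', hc', C', hC', hg⟩ := hg
  refine ⟨min c c', lt_min hc hc', C + C', add_nonneg hC hC', ?_⟩
  filter_upwards [hf, hg, hu] with x hfx hgx hux n hn
  rw [add_mul]
  refine (abs_add_le _ _).trans (add_le_add ((hfx n hn).trans ?_) ((hgx n hn).trans ?_)) <;> gcongr
  exacts [min_le_left _ _, min_le_right _ _]

theorem neg (hf : IsLaplaceBigO G u k f) : IsLaplaceBigO G u k fun n x => -f n x := by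
  simpa only [IsLaplaceBigO, abs_neg] using hf

theorem sub (hu : ∀ᶠ x in G, 0 ≤ u x) (hf : IsLaplaceBigO G u k f) (hg : IsLaplaceBigO G u k g) :
    IsLaplaceBigO G u k fun n x => f n x - g n x := by
  simpa only [sub_eq_add_neg] using hf.add hu hg.neg

theorem mono_order {l : ℝ} (hlk : l ≤ k) (hf : IsLaplaceBigO G u k f) : IsLaplaceBigO G u l f := by
  obtain ⟨c, hc, C, hC, hf⟩ := hf
  refine ⟨c, hc, C, hC, ?_⟩
  filter_upwards [hf] with x hfx n hn
  refine (hfx n hn).trans ?_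
  gcongr
  exact_mod_cast hn

theorem mono_size (hvu : ∀ᶠ x in G, v x ≤ u x) (hf : IsLaplaceBigO G u k f) :
    IsLaplaceBigO G v k f := by
  obtain ⟨c, hc, C, hC, hf⟩ := hf
  refine ⟨c, hc, C, hC, ?_⟩
  filter_upwards [hf, hvu] with x hfx hvux n hn
  refine (hfx n hn).trans ?_
  gcongr

theorem comp_tendsto {G' : Filter Y} {m : Y → X} (hm : Tendsto m G' G)
    (hf : IsLaplaceBigO G u k f) :
    IsLaplaceBigO G' (fun y => u (m y)) k fun n y => f n (m y) := by
  obtain ⟨c, hc, C, hC, hf⟩ := hf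
  exact ⟨c, hc, C, hC, hm.eventually hf⟩

theorem mul_isBigO (hu : ∀ᶠ x in G, 0 ≤ u x) {α : X → ℝ} {j : ℕ} (hα : α =O[G] fun x => u x ^ j)
    (hf : IsLaplaceBigO G u k f) : IsLaplaceBigO G u (k + j) fun n x => α x * f n x := by
  obtain ⟨c, hc, C, hC, hf⟩ := hf
  obtain ⟨D, hD, hα⟩ := hα.exists_nonneg
  refine ⟨c / 2, half_pos hc, D * C * (j.factorial / (c / 2) ^ j), by positivity, ?_⟩
  filter_upwards [hf, hα.bound, hu] with x hfx hαx hux n hn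
  have hn0 : (0 : ℝ) < n := by exact_mod_cast hn
  rw [Real.norm_eq_abs, Real.norm_of_nonneg (by positivity)] at hαx
  calc |α x * f n x|
      ≤ D * u x ^ j * (C * ((n : ℝ) ^ (-k) * Real.exp (-(c * (n * u x))))) := by
        rw [abs_mul]
        exact mul_le_mul hαx (hfx n hn) (abs_nonneg _) (by positivity)
    _ = D * C * (n : ℝ) ^ (-(k + j)) * ((n * u x) ^ j * Real.exp (-(c * (n * u x)))) := by
        rw [neg_add, Real.rpow_add hn0, Real.rpow_neg hn0.le j, Real.rpow_natCast,
          mul_pow]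
        field_simp
    _ ≤ D * C * (n : ℝ) ^ (-(k + j)) *
          (j.factorial / (c / 2) ^ j * Real.exp (-(c / 2 * (n * u x)))) := by
        exact mul_le_mul_of_nonneg_left (pow_mul_exp_neg_le hc (by positivity) j) (by positivity)
    _ = _ := by ring

theorem mul_bounded (hu : ∀ᶠ x in G, 0 ≤ u x) {α : X → ℝ} (hα : α =O[G] fun _ => (1 : ℝ))
    (hf : IsLaplaceBigO G u k f) : IsLaplaceBigO G u k fun n x => α x * f n x := by
  simpa using hf.mul_isBigO hu (j := 0) (by simpa using hα)

theorem seq_mul {a : ℕ → ℝ} {M : ℝ} (ha : ∀ n, |a n| ≤ M) (hf : IsLaplaceBigO G u k f) :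
    IsLaplaceBigO G u k fun n x => a n * f n x := by
  obtain ⟨c, hc, C, hC, hf⟩ := hf
  have M_nonneg : 0 ≤ M := (abs_nonneg _).trans (ha 0)
  refine ⟨c, hc, M * C, mul_nonneg M_nonneg hC, hf.mono fun x hx n hn => ?_⟩
  rw [abs_mul, mul_assoc]
  exact mul_le_mul (ha n) (hx n hn) (abs_nonneg _) M_nonneg

theorem sup {G' : Filter X} (hu : ∀ᶠ x in G ⊔ G', 0 ≤ u x) (hf : IsLaplaceBigO G u k f)
    (hf' : IsLaplaceBigO G' u k f) : IsLaplaceBigO (G ⊔ G') u k f := by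
  obtain ⟨c, hc, C, hC, hf⟩ := hf
  obtain ⟨c', hc', C', hC', hf'⟩ := hf'
  refine ⟨min c c', lt_min hc hc', C + C', add_nonneg hC hC', eventually_sup.mpr ⟨?_, ?_⟩⟩
  · filter_upwards [hf, hu.filter_mono le_sup_left] with x hfx hux n hn
    refine (hfx n hn).trans ?_
    gcongr
    exacts [le_add_of_nonneg_right hC', min_le_left _ _]
  · filter_upwards [hf', hu.filter_mono le_sup_right] with x hfx hux n hn
    refine (hfx n hn).trans ?_
    gcongr
    exacts [le_add_of_nonneg_left hC, min_le_right _ _]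

open Topology in
theorem of_near_of_far {s : Set X} (hu : ∀ x ∈ s, 0 ≤ u x)
    (near : IsLaplaceBigO (𝓟 s ⊓ comap u (𝓝 0)) u k f)
    (far : ∀ δ > 0, IsLaplaceBigO (𝓟 {x ∈ s | δ ≤ u x}) u k f) : IsLaplaceBigO (𝓟 s) u k f := by
  obtain ⟨c, hc, C, hC, h⟩ := near
  rw [inf_comm, eventually_inf_principal, eventually_comap, Metric.eventually_nhds_iff] at h
  obtain ⟨δ, hδ, h⟩ := h
  have near_set : IsLaplaceBigO (𝓟 {x ∈ s | u x < δ}) u k f := by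
    refine ⟨c, hc, C, hC, eventually_principal.mpr fun x hx => h ?_ x rfl hx.1⟩
    rw [Real.dist_0_eq_abs, abs_of_nonneg (hu x hx.1)]
    exact hx.2
  have cover : 𝓟 s = 𝓟 {x ∈ s | u x < δ} ⊔ 𝓟 {x ∈ s | δ ≤ u x} := by
    rw [sup_principal]
    congr 1
    ext x
    simp only [Set.mem_union, Set.mem_ofPred_eq, ← and_or_left, lt_or_ge, and_true]
  rw [cover]
  exact near_set.sup (cover ▸ eventually_principal.mpr hu) (far δ hδ)

theorem pow_of_abs_le_exp {c : ℝ} (hc : 0 < c) {φ : X → ℝ}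
    (hφ : ∀ᶠ x in G, |φ x| ≤ Real.exp (-(c * u x))) : IsLaplaceBigO G u 0 fun n x => φ x ^ n := by
  refine ⟨c, hc, 1, zero_le_one, ?_⟩
  filter_upwards [hφ] with x hx n _
  rw [abs_pow, neg_zero, Real.rpow_zero, one_mul, one_mul, mul_left_comm, ← mul_neg,
    Real.exp_nat_mul]
  gcongr

theorem exp_neg : IsLaplaceBigO G u 0 fun n x => Real.exp (-(n * u x)) :=
  ⟨1, one_pos, 1, zero_le_one, .of_forall fun x n _ => by simp⟩

theorem pow_of_abs_le_lt_one (hu : ∀ᶠ x in G, 0 ≤ u x) (hu_bdd : u =O[G] fun _ => (1 : ℝ))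
    {r : ℝ} (hr0 : 0 < r) (hr : r < 1) {φ : X → ℝ} (hφ : ∀ᶠ x in G, |φ x| ≤ r) (k : ℝ) :
    IsLaplaceBigO G u k fun n x => φ x ^ n := by
  obtain ⟨M, hM, hu_le⟩ := hu_bdd.exists_nonneg
  have log_neg := Real.log_neg hr0 hr
  have decay : IsLaplaceBigO G (fun x => 1 + u x) 0 fun n x => φ x ^ n := by
    refine pow_of_abs_le_exp (c := -Real.log r / (1 + M)) (by apply div_pos <;> linarith) ?_
    filter_upwards [hφ, hu_le.bound] with x hx hux
    rw [norm_one, mul_one] at hux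
    refine hx.trans ((Real.exp_log hr0).symm.le.trans (Real.exp_le_exp.mpr ?_))
    rw [neg_div, neg_mul, neg_neg, div_mul_eq_mul_div, le_div_iff₀ (by linarith)]
    nlinarith [le_abs_self (u x), Real.norm_eq_abs (u x)]
  have one_add_nonneg : ∀ᶠ x in G, 0 ≤ 1 + u x := hu.mono fun x hx => by linarith
  have decay_order : IsLaplaceBigO G (fun x => 1 + u x) (0 + ⌈k⌉₊) fun n x => 1 * φ x ^ n := by
    refine decay.mul_isBigO one_add_nonneg (IsBigO.of_bound 1 ?_)
    filter_upwards [hu] with x hx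
    rw [norm_one, one_mul, Real.norm_of_nonneg (by positivity)]
    exact one_le_pow₀ (by linarith)
  simp only [one_mul, zero_add] at decay_order
  exact (decay_order.mono_order (Nat.le_ceil k)).mono_size (.of_forall fun x => by linarith)

theorem pow_sub_exp_neg (hu : ∀ᶠ x in G, 0 ≤ u x) (hu_bdd : u =O[G] fun _ => (1 : ℝ)) {c : ℝ}
    (hc : 0 < c) {φ : X → ℝ} (hφ_le : ∀ᶠ x in G, |φ x| ≤ Real.exp (-(c * u x)))
    (hφ : (fun x => φ x - (1 - u x)) =O[G] fun x => u x ^ 2) :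
    IsLaplaceBigO G u 1 fun n x => φ x ^ n - Real.exp (-(n * u x)) := by
  obtain ⟨M, hM⟩ := hu_bdd.bound
  set b := min c 1
  have hb : 0 < b := lt_min hc one_pos
  have phase_diff : (fun x => φ x - Real.exp (-u x)) =O[G] fun x => u x ^ 2 := by
    simpa using hφ.sub (exp_neg_sub_one_sub_isBigO hu)
  have decay : IsLaplaceBigO G u (-1) fun n x => n * Real.exp (-(b * (n * u x))) := by
    refine ⟨b, hb, 1, zero_le_one, .of_forall fun x n _ => ?_⟩
    rw [neg_neg, Real.rpow_one, one_mul, abs_of_nonneg (by positivity)]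
  have order_one := decay.mul_isBigO hu (phase_diff.const_mul_left (Real.exp (b * M)))
  refine (order_one.of_abs_le ?_).mono_order (by norm_num)
  filter_upwards [hu, hφ_le, hM] with x hux hφx hMx n hn
  rw [norm_one, mul_one, Real.norm_of_nonneg hux] at hMx
  have max_le : max |φ x| |Real.exp (-u x)| ≤ Real.exp (-(b * u x)) := by
    refine max_le (hφx.trans ?_) ?_
    · gcongr
      exact min_le_left _ _
    · rw [Real.abs_exp]
      gcongr
      exact mul_le_of_le_one_left hux (min_le_right _ _)
  have pow_le : max |φ x| |Real.exp (-u x)| ^ (n - 1) ≤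
      Real.exp (b * M) * Real.exp (-(b * (n * u x))) := by
    refine (pow_le_pow_left₀ (by positivity) max_le _).trans ?_
    rw [← Real.exp_nat_mul, ← Real.exp_add, Nat.cast_pred hn]
    gcongr
    nlinarith
  calc |φ x ^ n - Real.exp (-(n * u x))|
      = |φ x ^ n - Real.exp (-u x) ^ n| := by rw [← Real.exp_nat_mul, mul_neg]
    _ ≤ |φ x - Real.exp (-u x)| * n * (Real.exp (b * M) * Real.exp (-(b * (n * u x)))) :=
        (abs_pow_sub_pow_le _ _ n).trans (by gcongr)
    _ = _ := by
        simp only [abs_mul, Real.abs_exp, Nat.abs_cast]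
        ring

theorem mul_pow_sub_mul_exp_neg (hu : ∀ᶠ x in G, 0 ≤ u x) (hu_bdd : u =O[G] fun _ => (1 : ℝ))
    {c : ℝ} (hc : 0 < c) {φ : X → ℝ} (hφ_le : ∀ᶠ x in G, |φ x| ≤ Real.exp (-(c * u x)))
    (hφ : (fun x => φ x - (1 - u x)) =O[G] fun x => u x ^ 2) {α β : X → ℝ} {j : ℕ}
    (hα : (fun x => α x - β x) =O[G] fun x => u x ^ (j + 1)) (hβ : β =O[G] fun x => u x ^ j) :
    IsLaplaceBigO G u (j + 1) fun n x => α x * φ x ^ n - β x * Real.exp (-(n * u x)) := by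
  have amplitude := (pow_of_abs_le_exp hc hφ_le).mul_isBigO hu hα
  have phase := (pow_sub_exp_neg hu hu_bdd hc hφ_le hφ).mul_isBigO hu hβ
  rw [zero_add, Nat.cast_succ] at amplitude
  rw [add_comm] at phase
  exact (amplitude.add hu phase).of_abs_le (.of_forall fun x n _ => (congrArg abs (by ring)).le)

end IsLaplaceBigO

end LaplaceBigO

section LaplaceIntegrals

open Asymptotics MeasureTheory Polynomial.Chebyshev

variable {X Y : Type*} {G : Filter X} {u : X → ℝ} {k m : ℝ} [MeasurableSpace Y] {μ : Measure Y}
  {v : Y → ℝ} {K : Set Y}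

/-- `∫ exp (-c * n * v) ∂μ = O(n ^ (-m))` for every `c > 0`: integrating against `μ` an error term
of Laplace's method for a phase of size `v` improves its order by `m`. -/
def HasLaplaceDecay (μ : Measure Y) (v : Y → ℝ) (m : ℝ) : Prop :=
  ∀ c > 0, ∃ C ≥ 0, ∀ n : ℕ, 1 ≤ n → Integrable (fun y => Real.exp (-(c * (n * v y)))) μ ∧
    ∫ y, Real.exp (-(c * (n * v y))) ∂μ ≤ C * (n : ℝ) ^ (-m)

theorem HasLaplaceDecay.const_mul (hv : HasLaplaceDecay μ v m) {κ : ℝ} (hκ : 0 < κ) :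
    HasLaplaceDecay μ (fun y => κ * v y) m := fun c hc => by
  obtain ⟨C, hC, h⟩ := hv (c * κ) (mul_pos hc hκ)
  refine ⟨C, hC, fun n hn => ?_⟩
  simpa only [mul_assoc, mul_left_comm] using h n hn

theorem HasLaplaceDecay.restrict (hv : HasLaplaceDecay μ v m) (s : Set Y) :
    HasLaplaceDecay (μ.restrict s) v m := fun c hc => by
  obtain ⟨C, hC, h⟩ := hv c hc
  exact ⟨C, hC, fun n hn => ⟨(h n hn).1.restrict, (h n hn).2.trans' <|
    setIntegral_le_integral (h n hn).1 (.of_forall fun y => (Real.exp_pos _).le)⟩⟩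

theorem HasLaplaceDecay.pi {d : ℕ} {μ : Fin d → Measure Y} [∀ i, SigmaFinite (μ i)]
    {v : Fin d → Y → ℝ} (hv : ∀ i, HasLaplaceDecay (μ i) (v i) m) :
    HasLaplaceDecay (Measure.pi μ) (fun y => ∑ i, v i (y i)) (d * m) := fun c hc => by
  choose C hC h using fun i => hv i c hc
  refine ⟨∏ i, C i, prod_nonneg fun i _ => hC i, fun n hn => ?_⟩
  simp only [mul_sum, ← sum_neg_distrib, Real.exp_sum]
  refine ⟨Integrable.fintype_prod fun i => (h i n hn).1, ?_⟩
  rw [integral_fintype_prod_eq_prod (fun i t => Real.exp (-(c * (n * v i t)))), neg_mul_eq_mul_neg,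
    mul_comm (d : ℝ), Real.rpow_mul_natCast n.cast_nonneg, ← Fin.prod_const, ← prod_mul_distrib]
  exact prod_le_prod (fun i _ => integral_nonneg fun _ => (Real.exp_pos _).le)
    fun i _ => (h i n hn).2

theorem IsLaplaceBigO.integral {f : ℕ → X × Y → ℝ}
    (hf : IsLaplaceBigO (G ×ˢ 𝓟 K) (fun p => u p.1 + v p.2) k f) (hK : ∀ᵐ y ∂μ, y ∈ K)
    (hv : HasLaplaceDecay μ v m) :
    IsLaplaceBigO G u (k + m) fun n x => ∫ y, f n (x, y) ∂μ := by
  obtain ⟨c, hc, C, hC, hf⟩ := hf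
  obtain ⟨D, hD, hv⟩ := hv c hc
  refine ⟨c, hc, C * D, mul_nonneg hC hD, ?_⟩
  filter_upwards [eventually_prod_principal_iff.mp hf] with x hx n hn
  obtain ⟨integrable, integral_le⟩ := hv n hn
  set M := C * ((n : ℝ) ^ (-k) * Real.exp (-(c * (n * u x))))
  have f_le : ∀ᵐ y ∂μ, ‖f n (x, y)‖ ≤ M * Real.exp (-(c * (n * v y))) := by
    filter_upwards [hK] with y hy
    refine (hx y hy n hn).trans_eq ?_
    simp only [M, mul_add, neg_add, Real.exp_add]
    ring
  calc |∫ y, f n (x, y) ∂μ|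
      ≤ ∫ y, M * Real.exp (-(c * (n * v y))) ∂μ :=
        norm_integral_le_of_norm_le (integrable.const_mul M) f_le
    _ ≤ M * (D * (n : ℝ) ^ (-m)) := by
        rw [integral_const_mul]
        gcongr
    _ = C * D * ((n : ℝ) ^ (-(k + m)) * Real.exp (-(c * (n * u x)))) := by
        rw [neg_add, Real.rpow_add (by exact_mod_cast hn)]
        ring

theorem IsLaplaceBigO.isBigO_integral {f : ℕ → Y → ℝ} (hf : IsLaplaceBigO (𝓟 K) v k f)
    (hK : ∀ᵐ y ∂μ, y ∈ K) (hv : HasLaplaceDecay μ v m) :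
    (fun n => ∫ y, f n y ∂μ) =O[atTop] fun n : ℕ => (n : ℝ) ^ (-(k + m)) := by
  have hf_snd : IsLaplaceBigO (𝓟 (Set.univ : Set Unit) ×ˢ 𝓟 K) (fun p => 0 + v p.2) k
      fun n p => f n p.2 := by
    simpa only [zero_add] using hf.comp_tendsto (tendsto_snd (f := 𝓟 (Set.univ : Set Unit)))
  obtain ⟨c, -, C, -, h⟩ := IsLaplaceBigO.integral (u := fun _ => 0) hf_snd hK hv
  refine .of_bound C (eventually_atTop.mpr ⟨1, fun n hn => ?_⟩)
  have bound := eventually_principal.mp h () trivial n hn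
  simp only [mul_zero, neg_zero, Real.exp_zero, mul_one] at bound
  rwa [Real.norm_of_nonneg (Real.rpow_nonneg n.cast_nonneg _)]

theorem hasLaplaceDecay_sq : HasLaplaceDecay volume (fun θ : ℝ => θ ^ 2) (1 / 2) := fun c hc => by
  refine ⟨√(Real.pi / c), Real.sqrt_nonneg _, fun n hn => ?_⟩
  have hn0 : (0 : ℝ) < n := by exact_mod_cast hn
  simp only [← mul_assoc, ← neg_mul (c * (n : ℝ))]
  refine ⟨integrable_exp_neg_mul_sq (mul_pos hc hn0), ?_⟩
  rw [integral_gaussian, ← div_div, Real.sqrt_div (by positivity), Real.rpow_neg hn0.le,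
    ← Real.sqrt_eq_rpow, div_eq_mul_inv]

theorem hasLaplaceDecay_one_sub : HasLaplaceDecay measureT (fun z => 1 - z) (1 / 2) := by
  intro c hc
  obtain ⟨C, hC, h⟩ := hasLaplaceDecay_sq.restrict (Set.Ioc 0 Real.pi) (c * (2 / Real.pi ^ 2))
    (by positivity)
  refine ⟨C, hC, fun n hn => ⟨integrable_measureT (by fun_prop), (h n hn).2.trans' ?_⟩⟩
  rw [integral_measureT_eq_integral_cos,
    intervalIntegral.integral_of_le Real.pi_pos.le]
  refine setIntegral_mono_on (Continuous.integrableOn_Ioc (by fun_prop)) (h n hn).1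
    measurableSet_Ioc fun θ hθ => Real.exp_le_exp.mpr ?_
  have cos_le := Real.cos_le_one_sub_mul_cos_sq (abs_le.mpr ⟨by linarith [hθ.1, hθ.2], hθ.2⟩)
  rw [neg_le_neg_iff, mul_assoc, mul_left_comm (2 / Real.pi ^ 2)]
  gcongr
  linarith

theorem integral_measureT_comp_neg (f : ℝ → ℝ) : ∫ z, f (-z) ∂measureT = ∫ z, f z ∂measureT := by
  rw [integral_measureT_eq_integral_cos, integral_measureT_eq_integral_cos]
  simpa using intervalIntegral.integral_comp_sub_left (fun θ => f (Real.cos θ)) (a := 0)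
    (b := Real.pi) Real.pi

theorem hasLaplaceDecay_one_sub_abs : HasLaplaceDecay measureT (fun z => 1 - |z|) (1 / 2) := by
  intro c hc
  obtain ⟨C, hC, h⟩ := hasLaplaceDecay_one_sub c hc
  refine ⟨C + C, by positivity, fun n hn => ⟨integrable_measureT (by fun_prop), ?_⟩⟩
  have h_one_add := (integral_measureT_comp_neg fun z => Real.exp (-(c * (n * (1 - z))))).trans_le
    (h n hn).2
  rw [add_mul]
  refine (add_le_add (h n hn).2 h_one_add).trans' ?_
  rw [← integral_add (h n hn).1 (integrable_measureT (by fun_prop))]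
  refine integral_mono (integrable_measureT (by fun_prop)) (integrable_measureT (by fun_prop))
    fun z => ?_
  rcases abs_choice z with hz | hz <;> simp only [hz]
  exacts [le_add_of_nonneg_right (Real.exp_pos _).le, le_add_of_nonneg_left (Real.exp_pos _).le]

theorem abs_one_sub_cos_sub_sq_div_two_le (θ : ℝ) :
    |1 - Real.cos θ - θ ^ 2 / 2| ≤ θ ^ 4 := by
  have abs_pow_four : |θ| ^ 4 = θ ^ 4 := by rw [← abs_pow, abs_of_nonneg (by positivity)]
  rcases le_or_gt |θ| 1 with hθ | hθ
  · have cos_bound := Real.cos_bound hθ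
    rw [abs_pow_four] at cos_bound
    rw [show 1 - Real.cos θ - θ ^ 2 / 2 = -(Real.cos θ - (1 - θ ^ 2 / 2)) by ring, abs_neg]
    linarith [pow_nonneg (sq_nonneg θ) 2]
  · have one_lt_sq : 1 < θ ^ 2 := (one_lt_sq_iff_one_lt_abs θ).mpr hθ
    rw [abs_le]
    constructor <;> nlinarith [Real.cos_le_one θ, Real.one_sub_sq_div_two_le_cos (x := θ)]

theorem exp_neg_one_sub_cos_sub_isBigO {κ : ℝ} (hκ : 0 < κ) (G : Filter ℝ) :
    (fun θ => Real.exp (-(κ * (1 - Real.cos θ))) - (1 - κ / 2 * θ ^ 2))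
      =O[G] fun θ => (κ / 2 * θ ^ 2) ^ 2 := by
  refine .of_bound (1 + 4 / κ) (.of_forall fun θ => ?_)
  have phase_nonneg : 0 ≤ κ * (1 - Real.cos θ) :=
    mul_nonneg hκ.le (sub_nonneg.mpr (Real.cos_le_one θ))
  have phase_le_size : κ * (1 - Real.cos θ) ≤ κ / 2 * θ ^ 2 := by
    nlinarith [Real.one_sub_sq_div_two_le_cos (x := θ)]
  rw [Real.norm_eq_abs, Real.norm_of_nonneg (sq_nonneg _)]
  calc |Real.exp (-(κ * (1 - Real.cos θ))) - (1 - κ / 2 * θ ^ 2)|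
      = |Real.exp (-(κ * (1 - Real.cos θ))) - (1 - κ * (1 - Real.cos θ)) +
          -κ * (1 - Real.cos θ - θ ^ 2 / 2)| := by ring_nf
    _ ≤ (κ * (1 - Real.cos θ)) ^ 2 + κ * θ ^ 4 := by
        refine (abs_add_le _ _).trans (add_le_add (abs_exp_neg_sub_one_sub_le phase_nonneg) ?_)
        rw [abs_mul, abs_neg, abs_of_pos hκ]
        gcongr
        exact abs_one_sub_cos_sub_sq_div_two_le θ
    _ ≤ (κ / 2 * θ ^ 2) ^ 2 + κ * θ ^ 4 := by gcongr
    _ = (1 + 4 / κ) * (κ / 2 * θ ^ 2) ^ 2 := by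
        field_simp
        ring

theorem exp_neg_one_sub_cos_isLaplaceBigO {κ : ℝ} (hκ : 0 < κ) :
    IsLaplaceBigO (𝓟 (Set.Ioc 0 Real.pi)) (fun θ => κ / 2 * θ ^ 2) 1 fun n θ =>
      Real.exp (-(n * (κ * (1 - Real.cos θ)))) - Real.exp (-(n * (κ / 2 * θ ^ 2))) := by
  have size_nonneg (θ : ℝ) : 0 ≤ κ / 2 * θ ^ 2 := by positivity
  have size_bdd : (fun θ : ℝ => κ / 2 * θ ^ 2) =O[𝓟 (Set.Ioc 0 Real.pi)] fun _ => (1 : ℝ) := by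
    refine .of_bound (κ / 2 * Real.pi ^ 2) (eventually_principal.mpr fun θ hθ => ?_)
    rw [Real.norm_of_nonneg (size_nonneg θ), norm_one, mul_one]
    gcongr
    exacts [hθ.1.le, hθ.2]
  have phase_le : ∀ᶠ θ in 𝓟 (Set.Ioc 0 Real.pi), |Real.exp (-(κ * (1 - Real.cos θ)))| ≤
      Real.exp (-(4 / Real.pi ^ 2 * (κ / 2 * θ ^ 2))) := by
    refine eventually_principal.mpr fun θ hθ => ?_
    have cos_le := Real.cos_le_one_sub_mul_cos_sq (abs_le.mpr ⟨by linarith [hθ.1, hθ.2], hθ.2⟩)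
    rw [Real.abs_exp, Real.exp_le_exp, neg_le_neg_iff,
      show 4 / Real.pi ^ 2 * (κ / 2 * θ ^ 2) = κ * (2 / Real.pi ^ 2 * θ ^ 2) by ring]
    gcongr
    linarith
  simpa only [← Real.exp_nat_mul, mul_neg] using IsLaplaceBigO.pow_sub_exp_neg
    (.of_forall size_nonneg) size_bdd (by positivity) phase_le
    (exp_neg_one_sub_cos_sub_isBigO hκ _)

theorem gaussian_tail_isLaplaceBigO {κ : ℝ} (hκ : 0 < κ) :
    IsLaplaceBigO (𝓟 (Set.Ioi Real.pi)) (fun θ => κ / 2 * θ ^ 2) 1 fun n θ =>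
      Real.exp (-(n * (κ / 2 * θ ^ 2))) := by
  have size_bound : (fun _ : ℝ => (1 : ℝ)) =O[𝓟 (Set.Ioi Real.pi)]
      fun θ => (κ / 2 * θ ^ 2) ^ 1 := by
    refine .of_bound (2 / κ) (eventually_principal.mpr fun θ (hθ : Real.pi < θ) => ?_)
    have one_le : 1 ≤ θ := by linarith [Real.pi_gt_three]
    rw [norm_one, pow_one, Real.norm_of_nonneg (by positivity)]
    field_simp
    exact one_le_pow₀ one_le
  simpa using IsLaplaceBigO.exp_neg.mul_isBigO (.of_forall fun θ => by positivity) size_bound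

theorem integral_exp_neg_one_sub_isBigO {κ : ℝ} (hκ : 0 < κ) :
    (fun n : ℕ => ∫ z, Real.exp (-(n * (κ * (1 - z)))) ∂measureT - √(Real.pi / (2 * κ * n)))
      =O[atTop] fun n : ℕ => (n : ℝ) ^ (-(3 / 2 : ℝ)) := by
  have decay := hasLaplaceDecay_sq.const_mul (half_pos hκ)
  have near := (exp_neg_one_sub_cos_isLaplaceBigO hκ).isBigO_integral
    (ae_restrict_mem measurableSet_Ioc) (decay.restrict (Set.Ioc 0 Real.pi))
  have tail := (gaussian_tail_isLaplaceBigO hκ).isBigO_integral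
    (ae_restrict_mem measurableSet_Ioi) (decay.restrict (Set.Ioi Real.pi))
  norm_num only at near tail
  refine (near.sub tail).congr' ?_ .rfl
  filter_upwards [eventually_gt_atTop 0] with n hn
  have gaussian_form (θ : ℝ) :
      Real.exp (-(n * (κ / 2 * θ ^ 2))) = Real.exp (-(κ * n / 2) * θ ^ 2) := by ring_nf
  have gaussian_integrable : Integrable fun θ : ℝ => Real.exp (-(κ * n / 2) * θ ^ 2) :=
    integrable_exp_neg_mul_sq (by positivity)
  have half_gaussian : ∫ θ in Set.Ioi (0 : ℝ), Real.exp (-(κ * n / 2) * θ ^ 2) =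
      √(Real.pi / (2 * κ * n)) := by
    rw [integral_gaussian_Ioi, ← Real.sqrt_sq zero_le_two, ← Real.sqrt_div (by positivity)]
    congr 1
    field_simp
    norm_num
  simp only [gaussian_form]
  rw [integral_sub (Continuous.integrableOn_Ioc (by fun_prop)) gaussian_integrable.integrableOn,
    integral_measureT_eq_integral_cos, intervalIntegral.integral_of_le Real.pi_pos.le,
    ← half_gaussian, ← Set.Ioc_union_Ioi_eq_Ioi Real.pi_pos.le,
    setIntegral_union (Set.Ioc_disjoint_Ioi le_rfl) measurableSet_Ioi
      gaussian_integrable.integrableOn gaussian_integrable.integrableOn, sub_sub]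

theorem mul_integral_one_sub_sq_mul_exp (t : ℝ) :
    t * ∫ z, (1 - z ^ 2) * Real.exp (-(t * (1 - z))) ∂measureT =
      ∫ z, z * Real.exp (-(t * (1 - z))) ∂measureT := by
  have hderiv (θ : ℝ) : HasDerivAt (fun θ => Real.sin θ * Real.exp (-(t * (1 - Real.cos θ))))
      (Real.cos θ * Real.exp (-(t * (1 - Real.cos θ))) -
        t * ((1 - Real.cos θ ^ 2) * Real.exp (-(t * (1 - Real.cos θ))))) θ := by
    refine ((Real.hasDerivAt_sin θ).mul
      (((Real.hasDerivAt_cos θ).const_sub 1).const_mul t).neg.exp).congr_deriv ?_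
    simp only [← Real.sin_sq, Pi.neg_apply]
    ring
  have ftc := intervalIntegral.integral_eq_sub_of_hasDerivAt (a := 0) (b := Real.pi)
    (fun θ _ => hderiv θ) (Continuous.intervalIntegrable (by fun_prop) _ _)
  rw [intervalIntegral.integral_sub (Continuous.intervalIntegrable (by fun_prop) _ _)
    (Continuous.intervalIntegrable (by fun_prop) _ _), intervalIntegral.integral_const_mul,
    Real.sin_zero, Real.sin_pi, zero_mul, zero_mul, sub_zero, sub_eq_zero] at ftc
  rw [integral_measureT_eq_integral_cos, integral_measureT_eq_integral_cos, ftc]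

theorem integral_one_sub_mul_exp_isBigO {κ : ℝ} (hκ : 0 < κ) :
    (fun n : ℕ => ∫ z, (1 - z) * Real.exp (-(n * (κ * (1 - z)))) ∂measureT)
      =O[atTop] fun n : ℕ => (n : ℝ) ^ (-(3 / 2 : ℝ)) := by
  have size_nonneg : ∀ᶠ z in 𝓟 (Set.Icc (-1 : ℝ) 1), 0 ≤ κ * (1 - z) :=
    eventually_principal.mpr fun z hz => mul_nonneg hκ.le (sub_nonneg.mpr hz.2)
  have amplitude : (fun z : ℝ => 1 - z) =O[𝓟 (Set.Icc (-1 : ℝ) 1)] fun z => (κ * (1 - z)) ^ 1 := by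
    simp only [pow_one]
    exact (isBigO_const_mul_self κ⁻¹ (fun z : ℝ => κ * (1 - z)) _).congr_left fun z =>
      inv_mul_cancel_left₀ hκ.ne' _
  have := (IsLaplaceBigO.exp_neg.mul_isBigO size_nonneg amplitude).isBigO_integral
    measureT_ae_mem_Icc (hasLaplaceDecay_one_sub.const_mul hκ)
  norm_num only at this
  exact this

theorem integral_one_add_mul_exp_isBigO {κ : ℝ} (hκ : 0 < κ) :
    (fun n : ℕ => ∫ z, (1 + z) * Real.exp (-(n * (κ * (1 - z)))) ∂measureT -
      √(2 * Real.pi / (κ * n))) =O[atTop] fun n : ℕ => (n : ℝ) ^ (-(3 / 2 : ℝ)) := by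
  refine (((integral_exp_neg_one_sub_isBigO hκ).const_mul_left 2).sub
    (integral_one_sub_mul_exp_isBigO hκ)).congr_left fun n => ?_
  have two_mul_sqrt : 2 * √(Real.pi / (2 * κ * n)) = √(2 * Real.pi / (κ * n)) := by
    rw [← Real.sqrt_sq zero_le_two, ← Real.sqrt_mul (by positivity), Real.sqrt_sq zero_le_two]
    congr 1
    ring
  rw [mul_sub, two_mul_sqrt, sub_right_comm, ← integral_const_mul,
    ← integral_sub (integrable_measureT (by fun_prop)) (integrable_measureT (by fun_prop))]
  congr! 3
  ring

theorem integral_one_sub_sq_mul_exp_isBigO {κ : ℝ} (hκ : 0 < κ) :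
    (fun n : ℕ => ∫ z, (1 - z ^ 2) * Real.exp (-(n * (κ * (1 - z)))) ∂measureT -
      √(Real.pi / (2 * κ * n)) / (κ * n)) =O[atTop] fun n : ℕ => (n : ℝ) ^ (-(5 / 2 : ℝ)) := by
  have numerator := ((integral_exp_neg_one_sub_isBigO hκ).sub
    (integral_one_sub_mul_exp_isBigO hκ)).const_mul_left κ⁻¹
  refine ((isBigO_refl (fun n : ℕ => (n : ℝ) ^ (-1 : ℝ)) atTop).mul numerator).congr' ?_ ?_
  all_goals
    filter_upwards [eventually_gt_atTop 0] with n hn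
    have hn0 : (0 : ℝ) < n := by exact_mod_cast hn
  · have by_parts := mul_integral_one_sub_sq_mul_exp (n * κ)
    simp only [mul_assoc (n : ℝ) κ] at by_parts
    rw [sub_right_comm, ← integral_sub (integrable_measureT (by fun_prop))
      (integrable_measureT (by fun_prop)), Real.rpow_neg_one]
    have z_eq (z : ℝ) : Real.exp (-(n * (κ * (1 - z)))) - (1 - z) *
        Real.exp (-(n * (κ * (1 - z)))) = z * Real.exp (-(n * (κ * (1 - z)))) := by ring
    simp only [z_eq, ← by_parts]
    field_simp
  · rw [← Real.rpow_add hn0]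
    norm_num

end LaplaceIntegrals

section NearCritical

open Asymptotics MeasureTheory Topology Polynomial.Chebyshev

theorem abs_halfLineKernel_sub_le {s σ τ z : ℝ} (hs : s < 1) (hσ : |σ| ≤ s) (hτ : |τ| ≤ s)
    (hz : z ∈ Set.Icc (-1) 1) :
    |halfLineKernel σ z - (1 - z ^ 2) / (1 - τ) ^ 2| ≤
      (1 - z ^ 2) * (4 * |σ - τ| + 2 * (1 - z)) / (1 - s) ^ 4 := by
  have σ_le := abs_le.mp hσ
  have τ_le := abs_le.mp hτ
  have sq_le_denom : (1 - s) ^ 2 ≤ 1 - 2 * σ * z + σ ^ 2 :=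
    (one_sub_abs_sq_le_halfLineKernel_denom hz).trans' (by gcongr)
  have sq_le_sq : (1 - s) ^ 2 ≤ (1 - τ) ^ 2 := by
    gcongr
    linarith
  have one_sub_pos : 0 < (1 - s) ^ 2 := by nlinarith
  have numerator_nonneg : 0 ≤ 1 - z ^ 2 := by nlinarith [hz.1, hz.2]
  have denom_diff : |(1 - τ) ^ 2 - (1 - 2 * σ * z + σ ^ 2)| ≤ 4 * |σ - τ| + 2 * (1 - z) := by
    rw [show (1 - τ) ^ 2 - (1 - 2 * σ * z + σ ^ 2) =
      (2 - σ - τ) * (σ - τ) - 2 * σ * (1 - z) by ring]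
    refine (abs_sub _ _).trans (add_le_add ?_ ?_)
    · rw [abs_mul]
      gcongr
      exact abs_le.mpr ⟨by linarith, by linarith⟩
    · rw [abs_mul, abs_mul, abs_two, abs_of_nonneg (sub_nonneg.mpr hz.2), mul_assoc]
      gcongr
      exact mul_le_of_le_one_left (sub_nonneg.mpr hz.2) (hσ.trans hs.le)
  have denom_le : (1 - s) ^ 4 ≤ (1 - 2 * σ * z + σ ^ 2) * (1 - τ) ^ 2 := by
    rw [show (1 - s) ^ 4 = (1 - s) ^ 2 * (1 - s) ^ 2 by ring]
    exact mul_le_mul sq_le_denom sq_le_sq one_sub_pos.le (one_sub_pos.le.trans sq_le_denom)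
  have denom_pos : 0 < (1 - s) ^ 4 := by positivity
  rw [halfLineKernel, div_sub_div _ _ (by linarith) (by linarith), mul_comm _ (1 - z ^ 2),
    ← mul_sub, abs_div, abs_mul, abs_of_nonneg numerator_nonneg,
    abs_of_pos (denom_pos.trans_le denom_le)]
  have one_sub_nonneg : 0 ≤ 1 - z := sub_nonneg.mpr hz.2
  gcongr

/-- Half-line walks with weights `p / σ`, `q`, `p * σ`, normalized so that their growth rate
`q + 2 * p` is `1 - ℓ + O(ℓ ^ 2)`, with parameters varying near a critical point `ℓ = 0`, where
`p = p₀` and `σ = σ₀`. -/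
structure IsNearCritical {X : Type*} (G : Filter X) (ℓ q p σ : X → ℝ) (p₀ σ₀ : ℝ) : Prop where
  tendsto_zero : Tendsto ℓ G (𝓝 0)
  nonneg : ∀ᶠ x in G, 0 ≤ ℓ x
  q_nonneg : ∀ᶠ x in G, 0 ≤ q x
  p₀_pos : 0 < p₀
  abs_σ₀_lt_one : |σ₀| < 1
  p_sub_isBigO : (fun x => p x - p₀) =O[G] ℓ
  σ_sub_isBigO : (fun x => σ x - σ₀) =O[G] ℓ
  growth_sub_isBigO : (fun x => q x + 2 * p x - (1 - ℓ x)) =O[G] fun x => ℓ x ^ 2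

namespace IsNearCritical

variable {X : Type*} {G : Filter X} {ℓ q p σ : X → ℝ} {p₀ σ₀ χ : ℝ}

theorem neg_σ (h : IsNearCritical G ℓ q p σ p₀ σ₀) :
    IsNearCritical G ℓ q p (fun x => -σ x) p₀ (-σ₀) where
  __ := h
  abs_σ₀_lt_one := by simpa using h.abs_σ₀_lt_one
  σ_sub_isBigO := h.σ_sub_isBigO.neg_left.congr_left fun x => by ring

theorem tendsto_p (h : IsNearCritical G ℓ q p σ p₀ σ₀) : Tendsto p G (𝓝 p₀) :=
  tendsto_sub_nhds_zero_iff.mp (h.p_sub_isBigO.trans_tendsto h.tendsto_zero)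

theorem tendsto_σ (h : IsNearCritical G ℓ q p σ p₀ σ₀) : Tendsto σ G (𝓝 σ₀) :=
  tendsto_sub_nhds_zero_iff.mp (h.σ_sub_isBigO.trans_tendsto h.tendsto_zero)

theorem tendsto_q (h : IsNearCritical G ℓ q p σ p₀ σ₀) : Tendsto q G (𝓝 (1 - 2 * p₀)) := by
  have remainder : Tendsto (fun x => q x + 2 * p x - (1 - ℓ x)) G (𝓝 0) :=
    h.growth_sub_isBigO.trans_tendsto (by simpa using h.tendsto_zero.pow 2)
  simpa using (remainder.add (h.tendsto_zero.const_sub 1)).sub (h.tendsto_p.const_mul 2)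

theorem size_nonneg (h : IsNearCritical G ℓ q p σ p₀ σ₀) :
    ∀ᶠ x in G ×ˢ 𝓟 (Set.Icc (0 : ℝ) 1), 0 ≤ ℓ x.1 + 2 * p₀ * (1 - x.2) := by
  refine eventually_prod_principal_iff.mpr (h.nonneg.mono fun x hx z hz => ?_)
  exact add_nonneg hx (mul_nonneg (by linarith [h.p₀_pos]) (sub_nonneg.mpr hz.2))

theorem ℓ_isBigO_size (h : IsNearCritical G ℓ q p σ p₀ σ₀) :
    (fun x => ℓ x.1) =O[G ×ˢ 𝓟 (Set.Icc (0 : ℝ) 1)] fun x => ℓ x.1 + 2 * p₀ * (1 - x.2) := by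
  refine .of_bound' (eventually_prod_principal_iff.mpr (h.nonneg.mono fun x hx z hz => ?_))
  rw [Real.norm_of_nonneg hx]
  exact (le_add_of_nonneg_right (mul_nonneg (by linarith [h.p₀_pos])
    (sub_nonneg.mpr hz.2))).trans (Real.le_norm_self _)

theorem one_sub_isBigO_size (h : IsNearCritical G ℓ q p σ p₀ σ₀) :
    (fun x => 1 - x.2) =O[G ×ˢ 𝓟 (Set.Icc (0 : ℝ) 1)] fun x => ℓ x.1 + 2 * p₀ * (1 - x.2) := by
  refine (((isBigO_refl _ _).sub h.ℓ_isBigO_size).const_mul_left (2 * p₀)⁻¹).congr_left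
    fun x => ?_
  rw [add_sub_cancel_left, inv_mul_cancel_left₀ (by linarith [h.p₀_pos])]

theorem one_sub_sq_isBigO_size (h : IsNearCritical G ℓ q p σ p₀ σ₀) :
    (fun x => 1 - x.2 ^ 2) =O[G ×ˢ 𝓟 (Set.Icc (0 : ℝ) 1)]
      fun x => ℓ x.1 + 2 * p₀ * (1 - x.2) := by
  refine .trans (.of_bound 2 (eventually_prod_principal_iff.mpr (.of_forall fun x z hz => ?_)))
    h.one_sub_isBigO_size
  have one_sub_nonneg : 0 ≤ 1 - z := sub_nonneg.mpr hz.2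
  rw [Real.norm_of_nonneg one_sub_nonneg, Real.norm_of_nonneg] <;> nlinarith [hz.1]

theorem size_isBigO_one (h : IsNearCritical G ℓ q p σ p₀ σ₀) :
    (fun x => ℓ x.1 + 2 * p₀ * (1 - x.2)) =O[G ×ˢ 𝓟 (Set.Icc (0 : ℝ) 1)]
      fun _ => (1 : ℝ) := by
  have snd_bdd : (fun x : X × ℝ => 2 * p₀ * (1 - x.2)) =O[G ×ˢ 𝓟 (Set.Icc 0 1)]
      fun _ => (1 : ℝ) := by
    refine .const_mul_left (.of_bound 1 (eventually_prod_principal_iff.mpr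
      (.of_forall fun x z hz => ?_))) _
    rw [Real.norm_of_nonneg (sub_nonneg.mpr hz.2), norm_one]
    linarith [hz.1]
  exact ((h.tendsto_zero.isBigO_one ℝ).comp_tendsto tendsto_fst).add snd_bdd

theorem kernel_sub_isBigO (h : IsNearCritical G ℓ q p σ p₀ σ₀) :
    (fun x => halfLineKernel (σ x.1) x.2 - (1 - x.2 ^ 2) / (1 - σ₀) ^ 2)
      =O[G ×ˢ 𝓟 (Set.Icc (0 : ℝ) 1)] fun x => (ℓ x.1 + 2 * p₀ * (1 - x.2)) ^ 2 := by
  obtain ⟨s, σ₀_lt_s, s_lt_one⟩ := exists_between h.abs_σ₀_lt_one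
  have σ_le : ∀ᶠ x in G, |σ x| ≤ s := h.tendsto_σ.abs.eventually_le_const σ₀_lt_s
  have factor : (fun x : X × ℝ => 4 * |σ x.1 - σ₀| + 2 * (1 - x.2)) =O[G ×ˢ 𝓟 (Set.Icc 0 1)]
      fun x => ℓ x.1 + 2 * p₀ * (1 - x.2) :=
    ((h.σ_sub_isBigO.abs_left.comp_tendsto tendsto_fst).trans h.ℓ_isBigO_size
      |>.const_mul_left 4).add (h.one_sub_isBigO_size.const_mul_left 2)
  simp only [sq (ℓ _ + _)]
  refine .trans (.of_bound (1 / (1 - s) ^ 4) ?_) (h.one_sub_sq_isBigO_size.mul factor)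
  refine eventually_prod_principal_iff.mpr (σ_le.mono fun x hx z hz => ?_)
  refine (abs_halfLineKernel_sub_le s_lt_one hx σ₀_lt_s.le ⟨by linarith [hz.1], hz.2⟩).trans ?_
  rw [one_div_mul_eq_div]
  gcongr
  exact Real.le_norm_self _

theorem growth_le (h : IsNearCritical G ℓ q p σ p₀ σ₀) :
    ∀ᶠ x in G, q x + 2 * p x ≤ 1 - ℓ x / 2 := by
  obtain ⟨C, hC, bound⟩ := h.growth_sub_isBigO.exists_pos
  have ℓ_small : ∀ᶠ x in G, ℓ x ≤ 1 / (2 * C) :=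
    h.tendsto_zero.eventually_le_const (by positivity)
  filter_upwards [bound.bound, ℓ_small, h.nonneg] with x hx hℓ hx0
  rw [Real.norm_of_nonneg (sq_nonneg _)] at hx
  have : C * ℓ x ^ 2 ≤ ℓ x / 2 := by
    rw [le_div_iff₀ (by positivity)] at hℓ
    nlinarith
  linarith [(Real.le_norm_self _).trans hx]

theorem edge_isLaplaceBigO (h : IsNearCritical G ℓ q p σ p₀ σ₀) :
    IsLaplaceBigO (G ×ˢ 𝓟 (Set.Icc (0 : ℝ) 1)) (fun x => ℓ x.1 + 2 * p₀ * (1 - x.2)) 2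
      fun n x => halfLineKernel (σ x.1) x.2 * (q x.1 + 2 * p x.1 * x.2) ^ n -
        (1 - x.2 ^ 2) / (1 - σ₀) ^ 2 * Real.exp (-(n * (ℓ x.1 + 2 * p₀ * (1 - x.2)))) := by
  have phase_le : ∀ᶠ x in G ×ˢ 𝓟 (Set.Icc (0 : ℝ) 1), |q x.1 + 2 * p x.1 * x.2| ≤
      Real.exp (-(1 / 2 * (ℓ x.1 + 2 * p₀ * (1 - x.2)))) := by
    refine eventually_prod_principal_iff.mpr ?_
    filter_upwards [h.q_nonneg, h.growth_le,
      h.tendsto_p.eventually_const_le (half_lt_self h.p₀_pos)] with x hq hgrowth hp z hz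
    have p_nonneg : 0 ≤ p x := (half_pos h.p₀_pos).le.trans hp
    rw [abs_of_nonneg (add_nonneg hq (mul_nonneg (by positivity) hz.1))]
    refine le_trans ?_ (Real.one_sub_le_exp_neg _)
    nlinarith [mul_le_mul_of_nonneg_right hp (sub_nonneg.mpr hz.2)]
  have phase_expansion : (fun x : X × ℝ => q x.1 + 2 * p x.1 * x.2 -
      (1 - (ℓ x.1 + 2 * p₀ * (1 - x.2)))) =O[G ×ˢ 𝓟 (Set.Icc (0 : ℝ) 1)]
        fun x => (ℓ x.1 + 2 * p₀ * (1 - x.2)) ^ 2 := by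
    have growth := (h.growth_sub_isBigO.comp_tendsto tendsto_fst).trans (h.ℓ_isBigO_size.pow 2)
    have slope := ((h.p_sub_isBigO.comp_tendsto tendsto_fst).trans h.ℓ_isBigO_size).mul
      h.one_sub_isBigO_size |>.const_mul_left 2
    refine (growth.sub (slope.congr_right fun x => (sq _).symm)).congr_left fun x => ?_
    simp only [Function.comp_apply]
    ring
  have amplitude : (fun x : X × ℝ => (1 - x.2 ^ 2) / (1 - σ₀) ^ 2)
      =O[G ×ˢ 𝓟 (Set.Icc (0 : ℝ) 1)] fun x => (ℓ x.1 + 2 * p₀ * (1 - x.2)) ^ 1 := by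
    simpa only [pow_one, div_eq_inv_mul] using h.one_sub_sq_isBigO_size.const_mul_left _
  have edge := IsLaplaceBigO.mul_pow_sub_mul_exp_neg h.size_nonneg h.size_isBigO_one one_half_pos
    phase_le phase_expansion h.kernel_sub_isBigO amplitude
  norm_num only at edge
  exact edge

theorem opposite_edge_isLaplaceBigO (h : IsNearCritical G ℓ q p σ p₀ σ₀) :
    IsLaplaceBigO (G ×ˢ 𝓟 (Set.Icc (0 : ℝ) 1)) (fun x => ℓ x.1 + 2 * p₀ * (1 - x.2)) 2
      fun n x => (1 - x.2 ^ 2) / (1 + σ₀) ^ 2 *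
        Real.exp (-(n * (ℓ x.1 + 2 * p₀ * (1 + x.2)))) := by
  have p₀_pos := h.p₀_pos
  have bounds : ∀ᶠ x in G ×ˢ 𝓟 (Set.Icc (0 : ℝ) 1),
      2 * p₀ ≤ ℓ x.1 + 2 * p₀ * (1 + x.2) ∧
        ℓ x.1 + 2 * p₀ * (1 - x.2) ≤ ℓ x.1 + 2 * p₀ * (1 + x.2) := by
    refine eventually_prod_principal_iff.mpr (h.nonneg.mono fun x hx z hz => ⟨?_, ?_⟩) <;>
      nlinarith [hz.1]
  have amplitude : (fun x : X × ℝ => (1 - x.2 ^ 2) / (1 + σ₀) ^ 2)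
      =O[G ×ˢ 𝓟 (Set.Icc (0 : ℝ) 1)] fun x => (ℓ x.1 + 2 * p₀ * (1 + x.2)) ^ 2 := by
    have one_isBigO : (fun _ : X × ℝ => (1 : ℝ)) =O[G ×ˢ 𝓟 (Set.Icc (0 : ℝ) 1)]
        fun x => (ℓ x.1 + 2 * p₀ * (1 + x.2)) ^ 2 := by
      refine .of_bound ((2 * p₀) ^ 2)⁻¹ (bounds.mono fun x hx => ?_)
      rw [norm_one, norm_pow, ← div_eq_inv_mul, one_le_div (by positivity)]
      gcongr
      exact hx.1.trans (Real.le_norm_self _)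
    simp only [div_eq_inv_mul]
    exact ((h.one_sub_sq_isBigO_size.trans h.size_isBigO_one).trans one_isBigO).const_mul_left _
  have size_nonneg : ∀ᶠ x in G ×ˢ 𝓟 (Set.Icc (0 : ℝ) 1), 0 ≤ ℓ x.1 + 2 * p₀ * (1 + x.2) :=
    bounds.mono fun x hx => hx.1.trans' (by positivity)
  have opposite := (IsLaplaceBigO.exp_neg.mul_isBigO size_nonneg amplitude).mono_size
    (bounds.mono fun x hx => hx.2)
  norm_num only at opposite
  exact opposite

theorem lazy_isLaplaceBigO (h : IsNearCritical G ℓ q p σ p₀ σ₀) (hp₀ : 2 * p₀ < 1) :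
    IsLaplaceBigO (G ×ˢ 𝓟 (Set.Icc (0 : ℝ) 1)) (fun x => ℓ x.1 + 2 * p₀ * (1 - x.2)) 2
      fun n x => halfLineKernel (σ x.1) (-x.2) * (q x.1 - 2 * p x.1 * x.2) ^ n := by
  have kernel_bdd : (fun x : X × ℝ => halfLineKernel (σ x.1) (-x.2))
      =O[G ×ˢ 𝓟 (Set.Icc (0 : ℝ) 1)] fun _ => (1 : ℝ) := by
    have remainder := h.neg_σ.kernel_sub_isBigO.trans (h.size_isBigO_one.pow 2)
    have main := (h.one_sub_sq_isBigO_size.trans h.size_isBigO_one).const_mul_left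
      ((1 - -σ₀) ^ 2)⁻¹
    refine ((remainder.congr_right fun _ => one_pow 2).add main).congr_left fun x => ?_
    rw [← halfLineKernel_neg (σ x.1), neg_neg]
    ring
  obtain ⟨r, max_lt_r, r_lt_one⟩ : ∃ r, max (1 - 2 * p₀) (2 * p₀) < r ∧ r < 1 :=
    exists_between (max_lt (by linarith [h.p₀_pos]) hp₀)
  have r_pos : 0 < r := (le_max_right _ _ |>.trans_lt max_lt_r).trans' (by linarith [h.p₀_pos])
  have phase_le : ∀ᶠ x in G ×ˢ 𝓟 (Set.Icc (0 : ℝ) 1), |q x.1 - 2 * p x.1 * x.2| ≤ r := by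
    refine eventually_prod_principal_iff.mpr ?_
    filter_upwards [h.q_nonneg, h.tendsto_p.eventually_const_le h.p₀_pos,
      h.tendsto_q.eventually_le_const ((le_max_left _ _).trans_lt max_lt_r),
      (h.tendsto_p.const_mul 2).eventually_le_const ((le_max_right _ _).trans_lt max_lt_r)]
      with x hq hp hqr hpr z hz
    exact abs_le.mpr ⟨by nlinarith [hz.2], by nlinarith [hz.1]⟩
  exact (IsLaplaceBigO.pow_of_abs_le_lt_one h.size_nonneg h.size_isBigO_one r_pos r_lt_one phase_le
    2).mul_bounded h.size_nonneg kernel_bdd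

/-- The integrand of `halfLineWeight_zero_eq_integral` minus its approximation by exponentials at
the edge `z = 1` and, when `χ = 1`, also at `z = -1`. -/
def halfLineRemainder (ℓ q p σ : X → ℝ) (p₀ σ₀ χ : ℝ) (n : ℕ) (x : X × ℝ) : ℝ :=
  halfLineKernel (σ x.1) x.2 * (q x.1 + 2 * p x.1 * x.2) ^ n -
    ((1 - x.2 ^ 2) / (1 - σ₀) ^ 2 * Real.exp (-(n * (ℓ x.1 + 2 * p₀ * (1 - x.2)))) +
      χ * (-1) ^ n *
        ((1 - x.2 ^ 2) / (1 + σ₀) ^ 2 * Real.exp (-(n * (ℓ x.1 + 2 * p₀ * (1 + x.2))))))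

theorem remainder_nonneg_isLaplaceBigO (h : IsNearCritical G ℓ q p σ p₀ σ₀) (hχ : |χ| ≤ 1) :
    IsLaplaceBigO (G ×ˢ 𝓟 (Set.Icc (0 : ℝ) 1)) (fun x => ℓ x.1 + 2 * p₀ * (1 - x.2)) 2
      (halfLineRemainder ℓ q p σ p₀ σ₀ χ) := by
  have opposite := h.opposite_edge_isLaplaceBigO.seq_mul (a := fun n => χ * (-1) ^ n) (M := 1)
    fun n => by simpa using hχ
  exact (h.edge_isLaplaceBigO.sub h.size_nonneg opposite).of_abs_le
    (.of_forall fun x n _ => (congrArg abs (sub_sub _ _ _).symm).le)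

theorem remainder_neg_isLaplaceBigO (h : IsNearCritical G ℓ q p σ p₀ σ₀)
    (hχ : χ = 1 ∧ (∀ᶠ x in G, q x = 0) ∨ χ = 0 ∧ 2 * p₀ < 1) :
    IsLaplaceBigO (G ×ˢ 𝓟 (Set.Icc (0 : ℝ) 1)) (fun x => ℓ x.1 + 2 * p₀ * (1 - x.2)) 2
      fun n x => halfLineRemainder ℓ q p σ p₀ σ₀ χ n (x.1, -x.2) := by
  have opposite := h.neg_σ.opposite_edge_isLaplaceBigO
  rcases hχ with ⟨rfl, hq⟩ | ⟨rfl, hp₀⟩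
  · have edge := h.neg_σ.edge_isLaplaceBigO.seq_mul (a := fun n => (-1) ^ n) (M := 1)
      fun n => by simp
    refine (edge.sub h.size_nonneg opposite).of_abs_le (eventually_prod_principal_iff.mpr
      (hq.mono fun x hx z _ n _ => (congrArg abs ?_).le))
    rw [halfLineRemainder, hx, ← halfLineKernel_neg (σ x), neg_neg, mul_neg, zero_add, zero_add,
      neg_pow (2 * p x * z)]
    simp only [sub_neg_eq_add, ← sub_eq_add_neg, neg_sq]
    ring
  · refine ((h.lazy_isLaplaceBigO hp₀).sub h.size_nonneg opposite).of_abs_le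
      (.of_forall fun x n _ => (congrArg abs ?_).le)
    simp only [halfLineRemainder, sub_neg_eq_add, ← sub_eq_add_neg, neg_sq, mul_neg]
    ring

theorem remainder_isLaplaceBigO (h : IsNearCritical G ℓ q p σ p₀ σ₀)
    (hχ : χ = 1 ∧ (∀ᶠ x in G, q x = 0) ∨ χ = 0 ∧ 2 * p₀ < 1) :
    IsLaplaceBigO (G ×ˢ 𝓟 (Set.Icc (-1 : ℝ) 1)) (fun x => ℓ x.1 + 2 * p₀ * (1 - |x.2|)) 2
      (halfLineRemainder ℓ q p σ p₀ σ₀ χ) := by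
  have size_nonneg : ∀ᶠ x in G ×ˢ 𝓟 (Set.Icc (-1 : ℝ) 1), 0 ≤ ℓ x.1 + 2 * p₀ * (1 - |x.2|) := by
    refine eventually_prod_principal_iff.mpr (h.nonneg.mono fun x hx z hz => ?_)
    exact add_nonneg hx (mul_nonneg (by linarith [h.p₀_pos]) (sub_nonneg.mpr (abs_le.mpr hz)))
  have abs_χ_le : |χ| ≤ 1 := by rcases hχ with ⟨rfl, -⟩ | ⟨rfl, -⟩ <;> norm_num
  have split : G ×ˢ 𝓟 (Set.Icc (-1 : ℝ) 1) =
      G ×ˢ 𝓟 (Set.Icc 0 1) ⊔ G ×ˢ 𝓟 (Set.Icc (-1 : ℝ) 0) := by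
    rw [← prod_sup, sup_principal, Set.union_comm,
      Set.Icc_union_Icc_eq_Icc (by norm_num) zero_le_one]
  rw [split] at size_nonneg ⊢
  refine .sup size_nonneg ?_ ?_
  · refine (h.remainder_nonneg_isLaplaceBigO abs_χ_le).mono_size
      (eventually_prod_principal_iff.mpr (.of_forall fun x z hz => ?_))
    rw [abs_of_nonneg hz.1]
  · have neg_tendsto : Tendsto (fun x : X × ℝ => (x.1, -x.2)) (G ×ˢ 𝓟 (Set.Icc (-1) 0))
        (G ×ˢ 𝓟 (Set.Icc 0 1)) := by
      refine tendsto_id.prodMap (tendsto_principal_principal.mpr fun z hz => ?_)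
      exact ⟨neg_nonneg.mpr hz.2, neg_le.mp hz.1⟩
    have reflected := (h.remainder_neg_isLaplaceBigO hχ).comp_tendsto neg_tendsto
    simp only [neg_neg, Prod.mk.eta] at reflected
    refine reflected.mono_size (eventually_prod_principal_iff.mpr (.of_forall fun x z hz => ?_))
    rw [abs_of_nonpos hz.2]

end IsNearCritical

/-- The factor multiplying `exp (-n * ℓ)` in the asymptotics of half-line walks near a critical
point; `χ` is `1` if the walks have period two and `0` otherwise. -/
def halfLineAmplitude (p₀ σ₀ χ : ℝ) (n : ℕ) : ℝ :=
  2 / Real.pi * ((1 / (1 - σ₀) ^ 2 + χ * (-1) ^ n / (1 + σ₀) ^ 2) *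
    ∫ z, (1 - z ^ 2) * Real.exp (-(n * (2 * p₀ * (1 - z)))) ∂measureT)

theorem integral_one_sub_sq_mul_exp_add (κ a : ℝ) (n : ℕ) :
    ∫ z, (1 - z ^ 2) * Real.exp (-(n * (a + κ * (1 - z)))) ∂measureT =
      Real.exp (-(n * a)) * ∫ z, (1 - z ^ 2) * Real.exp (-(n * (κ * (1 - z)))) ∂measureT := by
  rw [← integral_const_mul]
  refine integral_congr_ae (.of_forall fun z => ?_)
  simp only [mul_add, neg_add, Real.exp_add]
  ring

theorem halfLineAmplitude_mul_exp_isLaplaceBigO {X : Type*} {G : Filter X} {ℓ : X → ℝ}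
    {p₀ : ℝ} (hp₀ : 0 < p₀) (σ₀ χ : ℝ) (hℓ : ∀ᶠ x in G, 0 ≤ ℓ x) :
    IsLaplaceBigO G ℓ (3 / 2) fun n x =>
      halfLineAmplitude p₀ σ₀ χ n * Real.exp (-(n * ℓ x)) := by
  have two_mul_p₀_pos : 0 < 2 * p₀ := by positivity
  have size_nonneg : ∀ᶠ x in G ×ˢ 𝓟 (Set.Icc (-1 : ℝ) 1), 0 ≤ ℓ x.1 + 2 * p₀ * (1 - x.2) :=
    eventually_prod_principal_iff.mpr (hℓ.mono fun x hx z hz =>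
      add_nonneg hx (mul_nonneg two_mul_p₀_pos.le (sub_nonneg.mpr hz.2)))
  have amplitude : (fun x : X × ℝ => 1 - x.2 ^ 2) =O[G ×ˢ 𝓟 (Set.Icc (-1 : ℝ) 1)]
      fun x => (ℓ x.1 + 2 * p₀ * (1 - x.2)) ^ 1 := by
    refine .of_bound p₀⁻¹ (eventually_prod_principal_iff.mpr (hℓ.mono fun x hx z hz => ?_))
    have scaled_nonneg : 0 ≤ p₀ * (1 - z) := mul_nonneg hp₀.le (sub_nonneg.mpr hz.2)
    have one_sub_sq_nonneg : 0 ≤ 1 - z ^ 2 := by nlinarith [hz.1, hz.2]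
    rw [pow_one, Real.norm_of_nonneg one_sub_sq_nonneg, Real.norm_of_nonneg (by nlinarith),
      ← div_eq_inv_mul, le_div_iff₀ hp₀]
    nlinarith [hz.1, hz.2]
  have integrated := (IsLaplaceBigO.exp_neg.mul_isBigO size_nonneg amplitude).integral
    measureT_ae_mem_Icc (hasLaplaceDecay_one_sub.const_mul two_mul_p₀_pos)
  simp only [integral_one_sub_sq_mul_exp_add] at integrated
  norm_num only at integrated
  have coeff_le (n : ℕ) :
      |2 / Real.pi * (1 / (1 - σ₀) ^ 2 + χ * (-1) ^ n / (1 + σ₀) ^ 2)| ≤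
        2 / Real.pi * (1 / (1 - σ₀) ^ 2 + |χ| / (1 + σ₀) ^ 2) := by
    rw [abs_mul, abs_of_pos (by positivity : 0 < 2 / Real.pi)]
    gcongr
    refine (abs_add_le _ _).trans (add_le_add (abs_of_nonneg (by positivity)).le ?_)
    rw [abs_div, abs_mul, abs_pow, abs_neg, abs_one, one_pow, mul_one, abs_sq]
  refine (integrated.seq_mul coeff_le).of_abs_le (.of_forall fun x n _ => (congrArg abs ?_).le)
  rw [halfLineAmplitude]
  ring

theorem integral_halfLineRemainder {X : Type*} {ℓ q p σ : X → ℝ} {p₀ σ₀ χ : ℝ} {x : X}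
    (hσ : |σ x| < 1) (n : ℕ) :
    2 / Real.pi * ∫ z, IsNearCritical.halfLineRemainder ℓ q p σ p₀ σ₀ χ n (x, z) ∂measureT =
      2 / Real.pi * ∫ z, (q x + 2 * p x * z) ^ n * halfLineKernel (σ x) z ∂measureT -
        halfLineAmplitude p₀ σ₀ χ n * Real.exp (-(n * ℓ x)) := by
  have kernel_integrable :
      Integrable (fun z => halfLineKernel (σ x) z * (q x + 2 * p x * z) ^ n) measureT :=
    integrable_measureT ((continuousOn_halfLineKernel hσ).mul (by fun_prop))
  have edge_integrable : Integrable (fun z => (1 - z ^ 2) / (1 - σ₀) ^ 2 *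
      Real.exp (-(n * (ℓ x + 2 * p₀ * (1 - z))))) measureT :=
    integrable_measureT (by fun_prop)
  have opposite_integrable : Integrable (fun z => χ * (-1) ^ n * ((1 - z ^ 2) / (1 + σ₀) ^ 2 *
      Real.exp (-(n * (ℓ x + 2 * p₀ * (1 + z)))))) measureT :=
    integrable_measureT (by fun_prop)
  have reflect : ∫ z, (1 - z ^ 2) * Real.exp (-(n * (ℓ x + 2 * p₀ * (1 + z)))) ∂measureT =
      ∫ z, (1 - z ^ 2) * Real.exp (-(n * (ℓ x + 2 * p₀ * (1 - z)))) ∂measureT := by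
    rw [← integral_measureT_comp_neg]
    simp only [neg_sq, ← sub_eq_add_neg]
  simp only [IsNearCritical.halfLineRemainder]
  rw [integral_sub kernel_integrable (edge_integrable.fun_add opposite_integrable),
    integral_add edge_integrable opposite_integrable]
  simp only [integral_const_mul, div_mul_eq_mul_div, integral_div, reflect,
    integral_one_sub_sq_mul_exp_add, halfLineAmplitude, mul_comm (halfLineKernel _ _)]
  ring

theorem IsNearCritical.isLaplaceBigO_integral {X : Type*} {G : Filter X} {ℓ q p σ : X → ℝ}
    {p₀ σ₀ χ : ℝ} (h : IsNearCritical G ℓ q p σ p₀ σ₀)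
    (hχ : χ = 1 ∧ (∀ᶠ x in G, q x = 0) ∨ χ = 0 ∧ 2 * p₀ < 1) :
    IsLaplaceBigO G ℓ (5 / 2) fun n x =>
      2 / Real.pi * ∫ z, (q x + 2 * p x * z) ^ n * halfLineKernel (σ x) z ∂measureT -
        halfLineAmplitude p₀ σ₀ χ n * Real.exp (-(n * ℓ x)) := by
  have remainder_integral := ((h.remainder_isLaplaceBigO hχ).integral measureT_ae_mem_Icc
    (hasLaplaceDecay_one_sub_abs.const_mul (mul_pos two_pos h.p₀_pos))).seq_mul
      (a := fun _ => 2 / Real.pi) fun _ => le_rfl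
  norm_num only at remainder_integral
  refine remainder_integral.of_abs_le ?_
  filter_upwards [h.tendsto_σ.abs.eventually_lt_const h.abs_σ₀_lt_one] with x hσ n _
  rw [integral_halfLineRemainder hσ]

end NearCritical

section ProductBounds

variable {ι : Type*} {s : Finset ι} {x : ι → ℝ}

theorem one_sub_sum_le_prod_one_sub (hx : ∀ i ∈ s, x i ∈ Set.Icc 0 1) :
    1 - ∑ i ∈ s, x i ≤ ∏ i ∈ s, (1 - x i) := by
  induction s using Finset.induction_on with
  | empty => simp
  | insert a s ha ih =>
    rw [forall_mem_insert] at hx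
    rw [sum_insert ha, prod_insert ha]
    nlinarith [ih hx.2, hx.1.1, hx.1.2, sum_nonneg fun i hi => (hx.2 i hi).1]

theorem abs_prod_one_sub_sub_le (hx : ∀ i ∈ s, x i ∈ Set.Icc 0 1) :
    |∏ i ∈ s, (1 - x i) - (1 - ∑ i ∈ s, x i)| ≤ (∑ i ∈ s, x i) ^ 2 := by
  have prod_le_exp : ∏ i ∈ s, (1 - x i) ≤ Real.exp (-∑ i ∈ s, x i) := by
    rw [← sum_neg_distrib, Real.exp_sum]
    exact prod_le_prod (fun i hi => sub_nonneg.mpr (hx i hi).2) fun i _ =>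
      Real.one_sub_le_exp_neg _
  rw [abs_of_nonneg (sub_nonneg.mpr (one_sub_sum_le_prod_one_sub hx))]
  linarith [(abs_le.mp (abs_exp_neg_sub_one_sub_le (sum_nonneg fun i hi => (hx i hi).1))).2]

theorem prod_one_sub_le_one (hx : ∀ i ∈ s, x i ∈ Set.Icc 0 1) : ∏ i ∈ s, (1 - x i) ≤ 1 :=
  prod_le_one (fun i hi => sub_nonneg.mpr (hx i hi).2) fun i hi => sub_le_self _ (hx i hi).1

theorem prod_one_sub_le_one_sub (hx : ∀ i ∈ s, x i ∈ Set.Icc 0 1) {i : ι} (hi : i ∈ s) :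
    ∏ j ∈ s, (1 - x j) ≤ 1 - x i := by
  rw [← mul_prod_erase s _ hi]
  exact mul_le_of_le_one_right (sub_nonneg.mpr (hx i hi).2)
    (prod_one_sub_le_one fun j hj => hx j (mem_of_mem_erase hj))

theorem prod_one_sub_le_one_sub_sum_div (hx : ∀ i ∈ s, x i ∈ Set.Icc 0 1) :
    ∏ i ∈ s, (1 - x i) ≤ 1 - (∑ i ∈ s, x i) / (#s + 1) := by
  have sum_le : ∑ i ∈ s, x i ≤ #s * (1 - ∏ i ∈ s, (1 - x i)) := by
    rw [← nsmul_eq_mul]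
    exact sum_le_card_nsmul _ _ _ fun i hi => le_sub_comm.mp (prod_one_sub_le_one_sub hx hi)
  rw [le_sub_comm, div_le_iff₀ (by positivity)]
  linarith [prod_one_sub_le_one hx]

end ProductBounds

section CornerExpansion

open Asymptotics MeasureTheory Topology Polynomial.Chebyshev

variable {d : ℕ} {S : Finset (Fin (d + 1) → ℤ)} {w : (Fin (d + 1) → ℤ) → ℝ} {r : ℝ}

/-- A weighted set of small steps, symmetric over all axes but the last and with a step forwards
along every axis, whose characteristic polynomial at `(1, …, 1, z)` has its positive critical point
at `z = r > 1`. The last condition is the negativity of the drift. -/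
structure IsNegativeDriftModel (S : Finset (Fin (d + 1) → ℤ)) (w : (Fin (d + 1) → ℤ) → ℝ)
    (r : ℝ) : Prop where
  small_step : ∀ i ∈ S, ∀ j, i j = -1 ∨ i j = 0 ∨ i j = 1
  weight_pos : ∀ i ∈ S, 0 < w i
  symm : ∀ k : Fin d, SymmetricAxis (d + 1) S w k.castSucc
  exists_forward : ∀ k, ∃ i ∈ S, i k = 1
  one_lt : 1 < r
  critical : ∑ i ∈ S with i (Fin.last d) = -1, w i = r ^ 2 * ∑ i ∈ S with i (Fin.last d) = 1, w i

variable (S w r) in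
/-- The exponential rate at which contributions to the walk integral decay as the `k`-th variable
moves away from the corner `1`. -/
def decayRate (k : Fin d) : ℝ := 2 * BkAt d S w k r / SAt d S w r

variable (S w r) in
/-- The first order relative decrease of the characteristic polynomial from its value at the corner
`1` of the cube `[0, 1] ^ d`. -/
def cornerGap (y : Fin d → ℝ) : ℝ := ∑ k, decayRate S w r k * (1 - y k)

variable (S w) in
/-- The characteristic polynomial of a step set that is symmetric over its first axes, as a function
of the variables `y k = (z k + (z k)⁻¹) / 2`, with last variable `r`. -/
def foldedSum (r : ℝ) (y : Fin d → ℝ) : ℝ :=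
  ∑ i ∈ S, w i * ((∏ k, y k ^ (i k.castSucc).natAbs) * r ^ i (Fin.last d))

namespace IsNegativeDriftModel

theorem r_pos (h : IsNegativeDriftModel S w r) : 0 < r := one_pos.trans h.one_lt

theorem SAt_pos (h : IsNegativeDriftModel S w r) : 0 < SAt d S w r := by
  obtain ⟨i, hi, -⟩ := h.exists_forward (Fin.last d)
  exact sum_pos (fun i hi => mul_pos (h.weight_pos i hi) (zpow_pos h.r_pos _)) ⟨i, hi⟩

theorem BkAt_pos (h : IsNegativeDriftModel S w r) (k : Fin d) : 0 < BkAt d S w k r := by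
  obtain ⟨i, hi, hik⟩ := h.exists_forward k.castSucc
  exact sum_pos (fun i hi => mul_pos (h.weight_pos i (mem_filter.mp hi).1) (zpow_pos h.r_pos _))
    ⟨i, mem_filter.mpr ⟨hi, hik⟩⟩

theorem decayRate_pos (h : IsNegativeDriftModel S w r) (k : Fin d) : 0 < decayRate S w r k :=
  div_pos (mul_pos two_pos (h.BkAt_pos k)) h.SAt_pos

theorem mul_one_sub_le_cornerGap (h : IsNegativeDriftModel S w r) {y : Fin d → ℝ} (hy : y ≤ 1)
    (k : Fin d) : decayRate S w r k * (1 - y k) ≤ cornerGap S w r y :=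
  single_le_sum (f := fun k => decayRate S w r k * (1 - y k))
    (fun k _ => mul_nonneg (h.decayRate_pos k).le (sub_nonneg.mpr (hy k))) (mem_univ k)

theorem cornerGap_nonneg (h : IsNegativeDriftModel S w r) {y : Fin d → ℝ} (hy : y ≤ 1) :
    0 ≤ cornerGap S w r y :=
  sum_nonneg fun k _ => mul_nonneg (h.decayRate_pos k).le (sub_nonneg.mpr (hy k))

theorem foldedSum_eq (h : IsNegativeDriftModel S w r) (y : Fin d → ℝ) :
    foldedSum S w r y =
      foldedCoeff S w 0 y + foldedCoeff S w (-1) y / r + foldedCoeff S w 1 y * r := by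
  rw [foldedSum, sum_mul_prod_pow_mul_last h.small_step (fun j => r ^ j), zpow_neg_one, zpow_zero,
    zpow_one]
  ring

theorem foldedCoeff_neg_one_one (h : IsNegativeDriftModel S w r) :
    foldedCoeff S w (-1) 1 = r ^ 2 * foldedCoeff S w 1 1 := by
  simpa [foldedCoeff] using h.critical

theorem foldedCoeff_one_one_pos (h : IsNegativeDriftModel S w r) : 0 < foldedCoeff S w 1 1 := by
  obtain ⟨i, hi, hi1⟩ := h.exists_forward (Fin.last d)
  refine sum_pos (fun i hi => ?_) ⟨i, mem_filter.mpr ⟨hi, hi1⟩⟩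
  simpa using h.weight_pos i (mem_filter.mp hi).1

theorem foldedCoeff_nonneg (h : IsNegativeDriftModel S w r) (e : ℤ) {y : Fin d → ℝ} (hy : 0 ≤ y) :
    0 ≤ foldedCoeff S w e y :=
  sum_nonneg fun i hi => mul_nonneg (h.weight_pos i (mem_filter.mp hi).1).le
    (prod_nonneg fun k _ => pow_nonneg (hy k) _)

theorem sum_mul_natAbs_mul_zpow (h : IsNegativeDriftModel S w r) (k : Fin d) :
    ∑ i ∈ S, w i * ((i k.castSucc).natAbs * r ^ i (Fin.last d)) = 2 * BkAt d S w k r := by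
  have fold := sum_mul_comp_apply_eq_of_symmetricAxis (h.symm k)
    (Φ := fun i => r ^ i (Fin.last d)) (f := fun j => j.natAbs)
    (g := fun j => if j = 1 then 2 else 0)
    (fun i => by rw [Function.update_of_ne (Fin.castSucc_lt_last k).ne'])
    (fun i hi => by obtain hj | hj | hj := h.small_step i hi k.castSucc <;> norm_num [hj])
  rw [fold, BkAt, sum_filter, mul_sum]
  refine sum_congr rfl fun i _ => ?_
  split_ifs <;> ring

theorem sum_mul_linear_mul_zpow (h : IsNegativeDriftModel S w r) (y : Fin d → ℝ) :
    ∑ i ∈ S, w i * ((∑ k, (i k.castSucc).natAbs * (1 - y k)) * r ^ i (Fin.last d)) =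
      SAt d S w r * cornerGap S w r y := by
  have T_ne_zero := h.SAt_pos.ne'
  calc
    _ = ∑ k, (∑ i ∈ S, w i * ((i k.castSucc).natAbs * r ^ i (Fin.last d))) * (1 - y k) := by
      simp only [sum_mul, mul_sum]
      rw [sum_comm]
      exact sum_congr rfl fun k _ => sum_congr rfl fun i _ => by ring
    _ = SAt d S w r * cornerGap S w r y := by
      rw [cornerGap, mul_sum]
      refine sum_congr rfl fun k _ => ?_
      rw [h.sum_mul_natAbs_mul_zpow, decayRate]
      field_simp

theorem pow_natAbs_eq (h : IsNegativeDriftModel S w r) {i : Fin (d + 1) → ℤ} (hi : i ∈ S)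
    (j : Fin (d + 1)) (t : ℝ) : t ^ (i j).natAbs = 1 - (i j).natAbs * (1 - t) := by
  obtain hj | hj | hj := h.small_step i hi j <;> simp [hj]

theorem natAbs_mul_one_sub_mem_Icc (h : IsNegativeDriftModel S w r) {i : Fin (d + 1) → ℤ}
    (hi : i ∈ S) (j : Fin (d + 1)) {t : ℝ} (ht : t ∈ Set.Icc 0 1) :
    (i j).natAbs * (1 - t) ∈ Set.Icc 0 1 := by
  obtain hj | hj | hj := h.small_step i hi j <;>
    simp [hj, ht.1, ht.2]

theorem foldedSum_le (h : IsNegativeDriftModel S w r) {y : Fin d → ℝ} (hy : y ∈ Set.Icc 0 1) :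
    foldedSum S w r y ≤ SAt d S w r * (1 - cornerGap S w r y / (d + 1)) := by
  rw [mul_sub, mul_one, mul_div_assoc', ← h.sum_mul_linear_mul_zpow, SAt, foldedSum, sum_div,
    ← sum_sub_distrib]
  refine sum_le_sum fun i hi => ?_
  have prod_le := prod_one_sub_le_one_sub_sum_div (s := univ) fun k _ =>
    h.natAbs_mul_one_sub_mem_Icc hi k.castSucc ⟨hy.1 k, hy.2 k⟩
  simp only [← h.pow_natAbs_eq hi, card_univ, Fintype.card_fin] at prod_le
  have scale_nonneg : 0 ≤ w i * r ^ i (Fin.last d) :=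
    (mul_pos (h.weight_pos i hi) (zpow_pos h.r_pos _)).le
  calc w i * ((∏ k : Fin d, y k ^ (i k.castSucc).natAbs) * r ^ i (Fin.last d))
      = w i * r ^ i (Fin.last d) * ∏ k : Fin d, y k ^ (i k.castSucc).natAbs := by ring
    _ ≤ w i * r ^ i (Fin.last d) *
          (1 - (∑ k : Fin d, (i k.castSucc).natAbs * (1 - y k)) / (d + 1)) :=
        mul_le_mul_of_nonneg_left prod_le scale_nonneg
    _ = _ := by ring

theorem one_sub_isBigO_cornerGap (h : IsNegativeDriftModel S w r) (k : Fin d) :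
    (fun y : Fin d → ℝ => 1 - y k) =O[𝓟 (Set.Iic 1)] cornerGap S w r := by
  refine .of_bound (decayRate S w r k)⁻¹ (eventually_principal.mpr fun y hy => ?_)
  have one_sub_nonneg : 0 ≤ 1 - y k := sub_nonneg.mpr (hy k)
  rw [Real.norm_of_nonneg one_sub_nonneg, Real.norm_of_nonneg (h.cornerGap_nonneg hy),
    ← div_eq_inv_mul, le_div_iff₀' (h.decayRate_pos k)]
  exact h.mul_one_sub_le_cornerGap hy k

theorem linear_isBigO_cornerGap (h : IsNegativeDriftModel S w r) (i : Fin (d + 1) → ℤ) :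
    (fun y : Fin d → ℝ => ∑ k, (i k.castSucc).natAbs * (1 - y k)) =O[𝓟 (Set.Icc 0 1)]
      cornerGap S w r :=
  (IsBigO.fun_sum fun k _ => (h.one_sub_isBigO_cornerGap k).const_mul_left _).mono
    (principal_mono.mpr Set.Icc_subset_Iic_self)

theorem prod_pow_sub_isBigO (h : IsNegativeDriftModel S w r) {i : Fin (d + 1) → ℤ} (hi : i ∈ S) :
    (fun y : Fin d → ℝ => ∏ k, y k ^ (i k.castSucc).natAbs -
      (1 - ∑ k, (i k.castSucc).natAbs * (1 - y k))) =O[𝓟 (Set.Icc 0 1)]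
        fun y => cornerGap S w r y ^ 2 := by
  refine .trans (.of_bound' (eventually_principal.mpr fun y hy => ?_))
    ((h.linear_isBigO_cornerGap i).pow 2)
  simp only [h.pow_natAbs_eq hi]
  refine (abs_prod_one_sub_sub_le fun k _ => ?_).trans (Real.le_norm_self _)
  exact h.natAbs_mul_one_sub_mem_Icc hi _ ⟨hy.1 k, hy.2 k⟩

theorem foldedSum_sub_isBigO (h : IsNegativeDriftModel S w r) :
    (fun y => foldedSum S w r y / SAt d S w r - (1 - cornerGap S w r y)) =O[𝓟 (Set.Icc 0 1)]
      fun y => cornerGap S w r y ^ 2 := by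
  have expansion := (IsBigO.fun_sum fun i hi => (h.prod_pow_sub_isBigO hi).const_mul_left
    (w i * r ^ i (Fin.last d))).const_mul_left (SAt d S w r)⁻¹
  refine expansion.congr_left fun y => ?_
  have T_ne_zero := h.SAt_pos.ne'
  field_simp
  rw [mul_sub, ← h.sum_mul_linear_mul_zpow, mul_one, SAt, foldedSum, ← sum_sub_distrib,
    ← sum_sub_distrib]
  exact sum_congr rfl fun i _ => by ring

theorem foldedCoeff_sub_isBigO (h : IsNegativeDriftModel S w r) (e : ℤ) :
    (fun y => foldedCoeff S w e y - foldedCoeff S w e 1) =O[𝓟 (Set.Icc 0 1)]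
      cornerGap S w r := by
  simp only [foldedCoeff, ← sum_sub_distrib]
  refine .fun_sum fun i hi => ?_
  have linear := (h.linear_isBigO_cornerGap i).const_mul_left (w i)
  refine .trans (.of_bound' (eventually_principal.mpr fun y hy => ?_)) linear
  have x_mem (k : Fin d) := h.natAbs_mul_one_sub_mem_Icc (mem_filter.mp hi).1 k.castSucc
    ⟨hy.1 k, hy.2 k⟩
  have lower := one_sub_sum_le_prod_one_sub (s := univ) fun k _ => x_mem k
  have upper := prod_one_sub_le_one (s := univ) fun k _ => x_mem k
  simp only [← h.pow_natAbs_eq (mem_filter.mp hi).1] at lower upper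
  simp only [Pi.one_apply, one_pow, prod_const_one, ← mul_sub, norm_mul, Real.norm_eq_abs]
  refine mul_le_mul_of_nonneg_left ?_ (abs_nonneg _)
  rw [abs_of_nonpos (sub_nonpos.mpr upper)]
  exact (le_abs_self _).trans' (by linarith)

end IsNegativeDriftModel

end CornerExpansion

section NearCorner

open Asymptotics MeasureTheory Topology Polynomial.Chebyshev

theorem halfLineWeight_zero_eq_integral_sqrt {a b : ℝ} (hb : 0 < b) (hab : b < a) (q : ℝ) (n : ℕ) :
    halfLineWeight a q b n 0 =
      2 / Real.pi * ∫ z, (q + 2 * √(a * b) * z) ^ n * halfLineKernel √(b / a) z ∂measureT := by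
  have ha := hb.trans hab
  have a_eq : √(a * b) / √(b / a) = a := by
    rw [← Real.sqrt_div' _ (by positivity), Real.sqrt_eq_iff_mul_self_eq (by positivity) ha.le]
    field_simp
  have b_eq : √(a * b) * √(b / a) = b := by
    rw [← Real.sqrt_mul (by positivity), Real.sqrt_eq_iff_mul_self_eq (by positivity) hb.le]
    field_simp
  have ratio_lt_one : √(b / a) < 1 := by rwa [Real.sqrt_lt' one_pos, one_pow, div_lt_one ha]
  have formula := halfLineWeight_zero_eq_integral (p := √(a * b)) (q := q)
    (Real.sqrt_pos.mpr (div_pos hb ha)) ratio_lt_one n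
  rwa [a_eq, b_eq] at formula

variable {d : ℕ} {S : Finset (Fin (d + 1) → ℤ)} {w : (Fin (d + 1) → ℤ) → ℝ} {r χ : ℝ}

variable (S w r) in
/-- The points of the cube `[0, 1] ^ d` that are close to its corner `1`, as measured by
`cornerGap`. -/
def nearCorner : Filter (Fin d → ℝ) := 𝓟 (Set.Icc 0 1) ⊓ comap (cornerGap S w r) (𝓝 0)

theorem tendsto_cornerGap_nearCorner : Tendsto (cornerGap S w r) (nearCorner S w r) (𝓝 0) :=
  tendsto_comap.mono_left inf_le_right

theorem eventually_nearCorner_mem_Icc : ∀ᶠ y in nearCorner S w r, y ∈ Set.Icc 0 1 :=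
  Eventually.filter_mono inf_le_left (mem_principal_self _)

namespace IsNegativeDriftModel

theorem foldedCoeff_sub_isBigO_nearCorner (h : IsNegativeDriftModel S w r) (e : ℤ) :
    (fun y => foldedCoeff S w e y - foldedCoeff S w e 1) =O[nearCorner S w r]
      cornerGap S w r :=
  (h.foldedCoeff_sub_isBigO e).mono inf_le_left

theorem tendsto_foldedCoeff (h : IsNegativeDriftModel S w r) (e : ℤ) :
    Tendsto (foldedCoeff S w e) (nearCorner S w r) (𝓝 (foldedCoeff S w e 1)) :=
  tendsto_sub_nhds_zero_iff.mp
    ((h.foldedCoeff_sub_isBigO_nearCorner e).trans_tendsto tendsto_cornerGap_nearCorner)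

theorem comp_foldedCoeff_sub_isBigO (h : IsNegativeDriftModel S w r) {F : ℝ × ℝ → ℝ}
    (hF : DifferentiableAt ℝ F (foldedCoeff S w (-1) 1, foldedCoeff S w 1 1)) :
    (fun y => F (foldedCoeff S w (-1) y, foldedCoeff S w 1 y) -
      F (foldedCoeff S w (-1) 1, foldedCoeff S w 1 1)) =O[nearCorner S w r] cornerGap S w r :=
  (hF.isBigO_sub.comp_tendsto
    ((h.tendsto_foldedCoeff (-1)).prodMk_nhds (h.tendsto_foldedCoeff 1))).trans
      ((h.foldedCoeff_sub_isBigO_nearCorner (-1)).prod_left (h.foldedCoeff_sub_isBigO_nearCorner 1))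

theorem foldedCoeff_neg_one_one_pos (h : IsNegativeDriftModel S w r) :
    0 < foldedCoeff S w (-1) 1 := by
  rw [h.foldedCoeff_neg_one_one]
  exact mul_pos (pow_pos h.r_pos 2) h.foldedCoeff_one_one_pos

theorem sqrt_foldedCoeff_mul_one (h : IsNegativeDriftModel S w r) :
    √(foldedCoeff S w (-1) 1 * foldedCoeff S w 1 1) = r * foldedCoeff S w 1 1 := by
  rw [h.foldedCoeff_neg_one_one, show ∀ b, r ^ 2 * b * b = (r * b) ^ 2 by intro b; ring]
  exact Real.sqrt_sq (mul_pos h.r_pos h.foldedCoeff_one_one_pos).le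

theorem sqrt_foldedCoeff_div_one (h : IsNegativeDriftModel S w r) :
    √(foldedCoeff S w 1 1 / foldedCoeff S w (-1) 1) = 1 / r := by
  rw [h.foldedCoeff_neg_one_one, div_mul_cancel_right₀ h.foldedCoeff_one_one_pos.ne', ← inv_pow,
    ← one_div]
  exact Real.sqrt_sq (one_div_pos.mpr h.r_pos).le

theorem SAt_eq (h : IsNegativeDriftModel S w r) :
    SAt d S w r =
      foldedCoeff S w 0 1 + foldedCoeff S w (-1) 1 / r + foldedCoeff S w 1 1 * r := by
  simpa [foldedSum, SAt] using h.foldedSum_eq 1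

theorem growth_isBigO (h : IsNegativeDriftModel S w r) :
    (fun y => foldedCoeff S w 0 y / SAt d S w r +
      2 * (√(foldedCoeff S w (-1) y * foldedCoeff S w 1 y) / SAt d S w r) -
        (1 - cornerGap S w r y)) =O[nearCorner S w r] fun y => cornerGap S w r y ^ 2 := by
  have r_pos := h.r_pos
  have balanced : √(foldedCoeff S w (-1) 1 / r) - √(foldedCoeff S w 1 1 * r) = 0 := by
    rw [h.foldedCoeff_neg_one_one, sub_eq_zero]
    congr 1
    field_simp
  have imbalance := h.comp_foldedCoeff_sub_isBigO (F := fun x => √(x.1 / r) - √(x.2 * r))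
    (by
      have a_pos := h.foldedCoeff_neg_one_one_pos
      have b_pos := h.foldedCoeff_one_one_pos
      fun_prop (disch := dsimp only; positivity))
  simp only [balanced, sub_zero] at imbalance
  refine ((h.foldedSum_sub_isBigO.mono inf_le_left).sub
    ((imbalance.pow 2).const_mul_left (SAt d S w r)⁻¹)).congr' ?_ .rfl
  filter_upwards [eventually_nearCorner_mem_Icc] with y hy
  have a_nonneg := h.foldedCoeff_nonneg (-1) hy.1
  have b_nonneg := h.foldedCoeff_nonneg 1 hy.1
  have mixed : √(foldedCoeff S w (-1) y / r) * √(foldedCoeff S w 1 y * r) =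
      √(foldedCoeff S w (-1) y * foldedCoeff S w 1 y) := by
    rw [← Real.sqrt_mul (by positivity)]
    congr 1
    field_simp
  rw [sub_sq, Real.sq_sqrt (by positivity), Real.sq_sqrt (by positivity), mul_assoc, mixed,
    h.foldedSum_eq]
  ring

theorem isNearCritical (h : IsNegativeDriftModel S w r) :
    IsNearCritical (nearCorner S w r) (cornerGap S w r)
      (fun y => foldedCoeff S w 0 y / SAt d S w r)
      (fun y => √(foldedCoeff S w (-1) y * foldedCoeff S w 1 y) / SAt d S w r)
      (fun y => √(foldedCoeff S w 1 y / foldedCoeff S w (-1) y))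
      (r * foldedCoeff S w 1 1 / SAt d S w r) (1 / r) where
  tendsto_zero := tendsto_cornerGap_nearCorner
  nonneg := eventually_nearCorner_mem_Icc.mono fun y hy => h.cornerGap_nonneg hy.2
  q_nonneg := eventually_nearCorner_mem_Icc.mono fun y hy =>
    div_nonneg (h.foldedCoeff_nonneg 0 hy.1) h.SAt_pos.le
  p₀_pos := div_pos (mul_pos h.r_pos h.foldedCoeff_one_one_pos) h.SAt_pos
  abs_σ₀_lt_one := by
    rw [abs_of_pos (one_div_pos.mpr h.r_pos), div_lt_one h.r_pos]
    exact h.one_lt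
  p_sub_isBigO := by
    rw [← h.sqrt_foldedCoeff_mul_one]
    exact h.comp_foldedCoeff_sub_isBigO (F := fun x => √(x.1 * x.2) / SAt d S w r)
      (by
        have a_pos := h.foldedCoeff_neg_one_one_pos
        have b_pos := h.foldedCoeff_one_one_pos
        fun_prop (disch := dsimp only; positivity))
  σ_sub_isBigO := by
    rw [← h.sqrt_foldedCoeff_div_one]
    exact h.comp_foldedCoeff_sub_isBigO (F := fun x => √(x.2 / x.1))
      (by
        have a_pos := h.foldedCoeff_neg_one_one_pos
        have b_pos := h.foldedCoeff_one_one_pos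
        fun_prop (disch := dsimp only; positivity))
  growth_sub_isBigO := h.growth_isBigO

theorem eventually_foldedWeight_eq_integral (h : IsNegativeDriftModel S w r) :
    ∀ᶠ y in nearCorner S w r, ∀ n, foldedWeight S w n 0 y / SAt d S w r ^ n =
      2 / Real.pi * ∫ z, (foldedCoeff S w 0 y / SAt d S w r +
        2 * (√(foldedCoeff S w (-1) y * foldedCoeff S w 1 y) / SAt d S w r) * z) ^ n *
          halfLineKernel √(foldedCoeff S w 1 y / foldedCoeff S w (-1) y) z ∂measureT := by
  have one_lt_a_div_b : foldedCoeff S w 1 1 < foldedCoeff S w (-1) 1 := by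
    rw [h.foldedCoeff_neg_one_one]
    exact lt_mul_left h.foldedCoeff_one_one_pos (one_lt_pow₀ h.one_lt two_ne_zero)
  filter_upwards [(h.tendsto_foldedCoeff 1).eventually_lt (h.tendsto_foldedCoeff (-1))
    one_lt_a_div_b, (h.tendsto_foldedCoeff 1).eventually_const_lt h.foldedCoeff_one_one_pos]
    with y hba hb n
  rw [foldedWeight, halfLineWeight_zero_eq_integral_sqrt hb hba, mul_div_assoc, ← integral_div]
  congr 2 with z
  rw [mul_div_assoc', div_mul_eq_mul_div, ← add_div, div_pow, div_mul_eq_mul_div]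

theorem foldedWeight_near_isLaplaceBigO (h : IsNegativeDriftModel S w r)
    (hχ : χ = 1 ∧ {i ∈ S | i (Fin.last d) = 0} = ∅ ∨
      χ = 0 ∧ {i ∈ S | i (Fin.last d) = 0}.Nonempty) :
    IsLaplaceBigO (nearCorner S w r) (cornerGap S w r) (5 / 2) fun n y =>
      foldedWeight S w n 0 y / SAt d S w r ^ n -
        halfLineAmplitude (r * foldedCoeff S w 1 1 / SAt d S w r) (1 / r) χ n *
          Real.exp (-(n * cornerGap S w r y)) := by
  refine (h.isNearCritical.isLaplaceBigO_integral (χ := χ) ?_).of_abs_le ?_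
  · refine hχ.imp (And.imp_right fun hQ => .of_forall fun y => ?_) (And.imp_right fun hQ => ?_)
    · rw [foldedCoeff, hQ, sum_empty, zero_div]
    · have Q_pos : 0 < foldedCoeff S w 0 1 :=
        sum_pos (fun i hi => by simpa using h.weight_pos i (mem_filter.mp hi).1) hQ
      rw [mul_div_assoc', div_lt_one h.SAt_pos, h.SAt_eq, h.foldedCoeff_neg_one_one]
      field_simp
      linarith
  · filter_upwards [h.eventually_foldedWeight_eq_integral] with y hy n _
    rw [hy]

end IsNegativeDriftModel

end NearCorner

section WalkIntegral

open Asymptotics MeasureTheory Topology Polynomial.Chebyshev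

variable {d : ℕ} {S : Finset (Fin (d + 1) → ℤ)} {w : (Fin (d + 1) → ℤ) → ℝ} {r χ : ℝ}

variable (S w r χ) in
/-- The leading term of the normalized half-line walk weights `foldedWeight S w n 0 y / T ^ n`,
where `T = SAt d S w r`, near the corner `y = 1`. -/
def cornerWeight (n : ℕ) (y : Fin d → ℝ) : ℝ :=
  halfLineAmplitude (r * foldedCoeff S w 1 1 / SAt d S w r) (1 / r) χ n *
    Real.exp (-(n * cornerGap S w r y))

theorem abs_le_one_of_mem_Icc {y : Fin d → ℝ} (hy : y ∈ Set.Icc (-1) 1) : |y| ≤ 1 :=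
  fun k => abs_le.mpr ⟨hy.1 k, hy.2 k⟩

namespace IsNegativeDriftModel

theorem abs_foldedCoeff_le (h : IsNegativeDriftModel S w r) (e : ℤ) (y : Fin d → ℝ) :
    |foldedCoeff S w e y| ≤ foldedCoeff S w e |y| := by
  refine (abs_sum_le_sum_abs _ _).trans (sum_le_sum fun i hi => ?_)
  simp only [abs_mul, abs_prod, abs_pow, Pi.abs_apply,
    abs_of_pos (h.weight_pos i (mem_filter.mp hi).1), le_refl]

theorem abs_foldedWeight_le (h : IsNegativeDriftModel S w r) (n : ℕ) (m : ℤ) (y : Fin d → ℝ) :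
    |foldedWeight S w n m y| ≤ foldedWeight S w n m |y| :=
  abs_halfLineWeight_le (h.abs_foldedCoeff_le _ y) (h.abs_foldedCoeff_le _ y)
    (h.abs_foldedCoeff_le _ y) n m

theorem abs_foldedWeight_zero_le (h : IsNegativeDriftModel S w r) {y : Fin d → ℝ} (hy : 0 ≤ y)
    (n : ℕ) : |foldedWeight S w n 0 y| ≤ foldedSum S w r y ^ n := by
  have exponential := halfLineWeight_le_pow_mul_zpow (h.foldedCoeff_nonneg (-1) hy)
    (h.foldedCoeff_nonneg 0 hy) (h.foldedCoeff_nonneg 1 hy) h.one_lt.le n 0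
  rw [zpow_zero, mul_one, ← h.foldedSum_eq] at exponential
  refine (h.abs_foldedWeight_le n 0 y).trans ?_
  rwa [abs_of_nonneg hy]

theorem foldedSum_nonneg (h : IsNegativeDriftModel S w r) {y : Fin d → ℝ} (hy : 0 ≤ y) :
    0 ≤ foldedSum S w r y :=
  sum_nonneg fun i hi => mul_nonneg (h.weight_pos i hi).le
    (mul_nonneg (prod_nonneg fun k _ => pow_nonneg (hy k) _) (zpow_pos h.r_pos _).le)

theorem foldedSum_div_le (h : IsNegativeDriftModel S w r) {y : Fin d → ℝ}
    (hy : y ∈ Set.Icc 0 1) :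
    foldedSum S w r y / SAt d S w r ≤ 1 - cornerGap S w r y / (d + 1) := by
  rw [div_le_iff₀' h.SAt_pos]
  exact h.foldedSum_le hy

theorem cornerGap_isBigO_one (h : IsNegativeDriftModel S w r) :
    cornerGap S w r =O[𝓟 (Set.Icc 0 1)] fun _ => (1 : ℝ) := by
  refine .of_bound (d + 1) (eventually_principal.mpr fun y hy => ?_)
  rw [Real.norm_of_nonneg (h.cornerGap_nonneg hy.2), norm_one, mul_one,
    ← div_le_one (by positivity)]
  exact sub_nonneg.mp ((div_nonneg (h.foldedSum_nonneg hy.1) h.SAt_pos.le).trans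
    (h.foldedSum_div_le hy))

theorem foldedWeight_far_isLaplaceBigO (h : IsNegativeDriftModel S w r) {δ : ℝ} (hδ : 0 < δ)
    (k : ℝ) :
    IsLaplaceBigO (𝓟 {y ∈ Set.Icc 0 1 | δ ≤ cornerGap S w r y}) (cornerGap S w r) k
      fun n y => foldedWeight S w n 0 y / SAt d S w r ^ n := by
  have phase_le : ∀ᶠ y in 𝓟 {y ∈ Set.Icc 0 1 | δ ≤ cornerGap S w r y},
      |foldedSum S w r y / SAt d S w r| ≤ max (1 / 2) (1 - δ / (d + 1)) := by
    refine eventually_principal.mpr fun y hy => ?_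
    rw [abs_of_nonneg (div_nonneg (h.foldedSum_nonneg hy.1.1) h.SAt_pos.le)]
    refine (h.foldedSum_div_le hy.1).trans (le_max_of_le_right ?_)
    gcongr
    exact hy.2
  refine (IsLaplaceBigO.pow_of_abs_le_lt_one
    (eventually_principal.mpr fun y hy => h.cornerGap_nonneg hy.1.2)
    (h.cornerGap_isBigO_one.mono (principal_mono.mpr (Set.sep_subset _ _)))
    (lt_max_of_lt_left one_half_pos)
    (max_lt one_half_lt_one (sub_lt_self 1 (by positivity))) phase_le k).of_abs_le
      (eventually_principal.mpr fun y hy n _ => ?_)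
  rw [div_pow, abs_div, abs_div]
  exact div_le_div_of_nonneg_right ((h.abs_foldedWeight_zero_le hy.1.1 n).trans (le_abs_self _))
    (abs_nonneg _)

theorem cornerWeight_isLaplaceBigO (h : IsNegativeDriftModel S w r) {s : Set (Fin d → ℝ)}
    (hs : s ⊆ Set.Iic 1) :
    IsLaplaceBigO (𝓟 s) (cornerGap S w r) (3 / 2) (cornerWeight S w r χ) :=
  halfLineAmplitude_mul_exp_isLaplaceBigO h.isNearCritical.p₀_pos _ _
    (eventually_principal.mpr fun _ hy => h.cornerGap_nonneg (hs hy))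

theorem cornerWeight_far_isLaplaceBigO (h : IsNegativeDriftModel S w r) {δ : ℝ} (hδ : 0 < δ) :
    IsLaplaceBigO (𝓟 {y ∈ Set.Icc 0 1 | δ ≤ cornerGap S w r y}) (cornerGap S w r) (5 / 2)
      (cornerWeight S w r χ) := by
  have one_isBigO : (fun _ => (1 : ℝ)) =O[𝓟 {y ∈ Set.Icc 0 1 | δ ≤ cornerGap S w r y}]
      fun y => cornerGap S w r y ^ 1 := by
    refine .of_bound δ⁻¹ (eventually_principal.mpr fun y hy => ?_)
    rw [norm_one, pow_one, ← div_eq_inv_mul, one_le_div hδ]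
    exact hy.2.trans (Real.le_norm_self _)
  have raised := (h.cornerWeight_isLaplaceBigO (χ := χ) fun y hy => hy.1.2).mul_isBigO
    (eventually_principal.mpr fun y hy => h.cornerGap_nonneg hy.1.2) one_isBigO
  norm_num only [one_mul] at raised
  exact raised

theorem foldedWeight_sub_isLaplaceBigO_cube (h : IsNegativeDriftModel S w r)
    (hχ : χ = 1 ∧ {i ∈ S | i (Fin.last d) = 0} = ∅ ∨
      χ = 0 ∧ {i ∈ S | i (Fin.last d) = 0}.Nonempty) :
    IsLaplaceBigO (𝓟 (Set.Icc 0 1)) (cornerGap S w r) (5 / 2) fun n y =>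
      foldedWeight S w n 0 y / SAt d S w r ^ n - cornerWeight S w r χ n y :=
  .of_near_of_far (fun _ hy => h.cornerGap_nonneg hy.2) (h.foldedWeight_near_isLaplaceBigO hχ)
    fun _ hδ => (h.foldedWeight_far_isLaplaceBigO hδ _).sub
      (eventually_principal.mpr fun _ hy => h.cornerGap_nonneg hy.1.2)
      (h.cornerWeight_far_isLaplaceBigO hδ)

theorem foldedWeight_isLaplaceBigO_cube (h : IsNegativeDriftModel S w r)
    (hχ : χ = 1 ∧ {i ∈ S | i (Fin.last d) = 0} = ∅ ∨
      χ = 0 ∧ {i ∈ S | i (Fin.last d) = 0}.Nonempty) :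
    IsLaplaceBigO (𝓟 (Set.Icc 0 1)) (cornerGap S w r) (3 / 2) fun n y =>
      foldedWeight S w n 0 y / SAt d S w r ^ n := by
  have difference := (h.foldedWeight_sub_isLaplaceBigO_cube hχ).mono_order
    (by norm_num : (3 / 2 : ℝ) ≤ 5 / 2)
  have sum := difference.add (eventually_principal.mpr fun y hy => h.cornerGap_nonneg hy.2)
    (h.cornerWeight_isLaplaceBigO (χ := χ) fun y hy => hy.2)
  simpa only [sub_add_cancel] using sum

theorem cornerGap_abs_nonneg (h : IsNegativeDriftModel S w r) {y : Fin d → ℝ}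
    (hy : y ∈ Set.Icc (-1) 1) : 0 ≤ cornerGap S w r |y| :=
  h.cornerGap_nonneg (abs_le_one_of_mem_Icc hy)

theorem cornerGap_abs_le (h : IsNegativeDriftModel S w r) (y : Fin d → ℝ) :
    cornerGap S w r |y| ≤ cornerGap S w r y :=
  sum_le_sum fun k _ =>
    mul_le_mul_of_nonneg_left (sub_le_sub_left (le_abs_self (y k)) 1) (h.decayRate_pos k).le

theorem prod_one_add_isBigO (h : IsNegativeDriftModel S w r) :
    (fun y : Fin d → ℝ => ∏ k, (1 + y k)) =O[𝓟 {y ∈ Set.Icc (-1) 1 | ¬0 ≤ y}]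
      fun y => cornerGap S w r |y| ^ 1 := by
  have sum_isBigO : (fun y : Fin d → ℝ => ∑ k, (1 - |y| k)) =O[𝓟 {y ∈ Set.Icc (-1) 1 | ¬0 ≤ y}]
      fun y => cornerGap S w r |y| :=
    .fun_sum fun k _ => (h.one_sub_isBigO_cornerGap k).comp_tendsto
      (tendsto_principal_principal.mpr fun y hy => abs_le_one_of_mem_Icc hy.1)
  simp only [pow_one]
  refine .trans (.of_bound (2 ^ d) (eventually_principal.mpr fun y ⟨hy, hneg⟩ => ?_)) sum_isBigO
  obtain ⟨k, hk⟩ : ∃ k, y k < 0 := by simpa [Pi.le_def] using hneg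
  have lower (j : Fin d) : -1 ≤ y j := hy.1 j
  have upper (j : Fin d) : y j ≤ 1 := hy.2 j
  have one_sub_nonneg (j : Fin d) : 0 ≤ 1 - |y| j := sub_nonneg.mpr (abs_le_one_of_mem_Icc hy j)
  have prod_le : ∏ j, (1 - (1 - y j) / 2) ≤ 1 - (1 - y k) / 2 :=
    prod_one_sub_le_one_sub (fun j _ => ⟨by linarith [upper j], by linarith [lower j]⟩)
      (mem_univ k)
  have scale (j : Fin d) : 1 + y j = 2 * (1 - (1 - y j) / 2) := by ring
  rw [Real.norm_of_nonneg (prod_nonneg fun j _ => by linarith [lower j]),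
    Real.norm_of_nonneg (sum_nonneg fun j _ => one_sub_nonneg j)]
  calc ∏ j, (1 + y j)
      = 2 ^ d * ∏ j, (1 - (1 - y j) / 2) := by simp [scale, prod_mul_distrib]
    _ ≤ 2 ^ d * (1 - |y| k) := by
        rw [Pi.abs_apply, abs_of_neg hk]
        gcongr
        linarith [lower k]
    _ ≤ 2 ^ d * ∑ j, (1 - |y| j) := by
        gcongr
        exact single_le_sum (f := fun j => 1 - |y| j) (fun j _ => one_sub_nonneg j) (mem_univ k)

theorem prod_mul_sub_isLaplaceBigO_of_not_nonneg (h : IsNegativeDriftModel S w r)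
    (hχ : χ = 1 ∧ {i ∈ S | i (Fin.last d) = 0} = ∅ ∨
      χ = 0 ∧ {i ∈ S | i (Fin.last d) = 0}.Nonempty) :
    IsLaplaceBigO (𝓟 {y ∈ Set.Icc (-1) 1 | ¬0 ≤ y}) (fun y => cornerGap S w r |y|) (5 / 2)
      fun n y => (∏ k, (1 + y k)) *
        (foldedWeight S w n 0 y / SAt d S w r ^ n - cornerWeight S w r χ n y) := by
  have gap_nonneg : ∀ᶠ y in 𝓟 {y : Fin d → ℝ | y ∈ Set.Icc (-1) 1 ∧ ¬0 ≤ y},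
      0 ≤ cornerGap S w r |y| :=
    eventually_principal.mpr fun y hy => h.cornerGap_abs_nonneg hy.1
  have abs_tendsto : Tendsto (fun y : Fin d → ℝ => |y|) (𝓟 {y ∈ Set.Icc (-1) 1 | ¬0 ≤ y})
      (𝓟 (Set.Icc 0 1)) :=
    tendsto_principal_principal.mpr fun y hy => ⟨abs_nonneg y, abs_le_one_of_mem_Icc hy.1⟩
  have weight := ((h.foldedWeight_isLaplaceBigO_cube hχ).comp_tendsto abs_tendsto).of_abs_le
    (f := fun n y => foldedWeight S w n 0 y / SAt d S w r ^ n) (.of_forall fun y n _ => by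
      rw [abs_div, abs_div]
      exact div_le_div_of_nonneg_right ((h.abs_foldedWeight_le n 0 y).trans (le_abs_self _))
        (abs_nonneg _))
  have corner := (h.cornerWeight_isLaplaceBigO (χ := χ)
    (Set.Icc_subset_Iic_self (a := 0))).comp_tendsto abs_tendsto |>.of_abs_le
      (f := cornerWeight S w r χ) (.of_forall fun y n _ => by
        rw [cornerWeight, cornerWeight, abs_mul, abs_mul, Real.abs_exp, Real.abs_exp]
        gcongr
        exact h.cornerGap_abs_le _)
  have raised := (weight.sub gap_nonneg corner).mul_isBigO gap_nonneg h.prod_one_add_isBigO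
  norm_num only at raised
  exact raised

theorem prod_mul_sub_isLaplaceBigO (h : IsNegativeDriftModel S w r)
    (hχ : χ = 1 ∧ {i ∈ S | i (Fin.last d) = 0} = ∅ ∨
      χ = 0 ∧ {i ∈ S | i (Fin.last d) = 0}.Nonempty) :
    IsLaplaceBigO (𝓟 (Set.Icc (-1) 1)) (fun y => cornerGap S w r |y|) (5 / 2)
      fun n y => (∏ k, (1 + y k)) *
        (foldedWeight S w n 0 y / SAt d S w r ^ n - cornerWeight S w r χ n y) := by
  have prod_isBigO_one : (fun y : Fin d → ℝ => ∏ k, (1 + y k)) =O[𝓟 (Set.Icc 0 1)]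
      fun _ => (1 : ℝ) := by
    refine .of_bound (2 ^ d) (eventually_principal.mpr fun y hy => ?_)
    have lower (k : Fin d) : 0 ≤ y k := hy.1 k
    have upper (k : Fin d) : y k ≤ 1 := hy.2 k
    rw [norm_one, mul_one, Real.norm_of_nonneg (prod_nonneg fun k _ => by linarith [lower k])]
    refine (prod_le_prod (g := fun _ => 2) (fun k _ => ?_) fun k _ => ?_).trans_eq (by simp)
    · linarith [lower k]
    · linarith [upper k]
  have gap_nonneg : ∀ᶠ y in 𝓟 (Set.Icc 0 1), 0 ≤ cornerGap S w r y :=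
    eventually_principal.mpr fun y hy => h.cornerGap_nonneg hy.2
  have cube := (h.foldedWeight_sub_isLaplaceBigO_cube hχ).mul_bounded gap_nonneg prod_isBigO_one
  have cover : 𝓟 (Set.Icc (-1 : Fin d → ℝ) 1) =
      𝓟 (Set.Icc 0 1) ⊔ 𝓟 {y ∈ Set.Icc (-1) 1 | ¬0 ≤ y} := by
    rw [sup_principal]
    congr 1
    ext y
    by_cases hy : 0 ≤ y
    · simp [hy, (neg_nonpos.mpr zero_le_one).trans hy]
    · simp [hy]
  rw [cover]
  refine .sup (cover ▸ eventually_principal.mpr fun y hy => h.cornerGap_abs_nonneg hy) ?_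
    (h.prod_mul_sub_isLaplaceBigO_of_not_nonneg hχ)
  refine cube.mono_size (eventually_principal.mpr fun y hy => ?_)
  rw [abs_of_nonneg hy.1]

theorem integral_prod_mul_foldedWeight_div (h : IsNegativeDriftModel S w r) (n : ℕ) :
    ∫ y, (∏ k, (1 + y k)) * (foldedWeight S w n 0 y / SAt d S w r ^ n) ∂measureTPi d =
      Real.pi ^ d * walkWeight (d + 1) S w n / SAt d S w r ^ n := by
  simp only [mul_div_assoc', integral_div]
  rw [walkWeight_eq_integral h.small_step h.symm]

theorem integral_prod_mul_cornerWeight (n : ℕ) :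
    ∫ y, (∏ k, (1 + y k)) * cornerWeight S w r χ n y ∂measureTPi d =
      halfLineAmplitude (r * foldedCoeff S w 1 1 / SAt d S w r) (1 / r) χ n *
        ∏ k, ∫ z, (1 + z) * Real.exp (-(n * (decayRate S w r k * (1 - z)))) ∂measureT := by
  simp only [← integral_fintype_prod_eq_prod, ← integral_const_mul, cornerWeight, cornerGap,
    mul_sum, ← sum_neg_distrib, Real.exp_sum, prod_mul_distrib, mul_left_comm]

theorem integrable_prod_mul_foldedWeight_div (n : ℕ) :
    Integrable (fun y => (∏ k, (1 + y k)) * (foldedWeight S w n 0 y / SAt d S w r ^ n))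
      (measureTPi d) :=
  integrable_measureTPi ((by fun_prop : Continuous fun y : Fin d → ℝ => ∏ k, (1 + y k)).mul
    ((continuous_foldedWeight n 0).div_const _)).continuousOn

theorem integrable_prod_mul_cornerWeight (n : ℕ) :
    Integrable (fun y => (∏ k, (1 + y k)) * cornerWeight S w r χ n y) (measureTPi d) := by
  unfold cornerWeight cornerGap
  exact integrable_measureTPi (by fun_prop)

theorem walkWeight_sub_isBigO (h : IsNegativeDriftModel S w r)
    (hχ : χ = 1 ∧ {i ∈ S | i (Fin.last d) = 0} = ∅ ∨
      χ = 0 ∧ {i ∈ S | i (Fin.last d) = 0}.Nonempty) :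
    (fun n => Real.pi ^ d * walkWeight (d + 1) S w n / SAt d S w r ^ n -
      halfLineAmplitude (r * foldedCoeff S w 1 1 / SAt d S w r) (1 / r) χ n *
        ∏ k, ∫ z, (1 + z) * Real.exp (-(n * (decayRate S w r k * (1 - z)))) ∂measureT)
      =O[atTop] fun n : ℕ => (n : ℝ) ^ (-(5 / 2 + d * (1 / 2) : ℝ)) := by
  have decay : HasLaplaceDecay (measureTPi d) (fun y => cornerGap S w r |y|) (d * (1 / 2)) :=
    HasLaplaceDecay.pi (v := fun k z => decayRate S w r k * (1 - |z|)) fun k =>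
      hasLaplaceDecay_one_sub_abs.const_mul (h.decayRate_pos k)
  refine ((h.prod_mul_sub_isLaplaceBigO hχ).isBigO_integral measureTPi_ae_mem_Icc decay).congr_left
    fun n => ?_
  rw [← h.integral_prod_mul_foldedWeight_div, ← integral_prod_mul_cornerWeight, ← integral_sub
    (integrable_prod_mul_foldedWeight_div n) (integrable_prod_mul_cornerWeight n)]
  simp only [mul_sub]

end IsNegativeDriftModel

end WalkIntegral

section PowerLaw

open Asymptotics MeasureTheory Polynomial.Chebyshev

variable {f g : ℕ → ℝ} {c c' a a' : ℝ}

/-- `f n = c * n ^ (-a) + O(n ^ (-(a + 1)))` as `n → ∞`. -/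
def HasPowerLaw (f : ℕ → ℝ) (c a : ℝ) : Prop :=
  (fun n => f n - c * (n : ℝ) ^ (-a)) =O[atTop] fun n => (n : ℝ) ^ (-(a + 1))

theorem rpow_isBigO_rpow_of_le {a b : ℝ} (hab : a ≤ b) :
    (fun n : ℕ => (n : ℝ) ^ a) =O[atTop] fun n => (n : ℝ) ^ b := by
  refine .of_bound' (eventually_atTop.mpr ⟨1, fun n hn => ?_⟩)
  rw [Real.norm_of_nonneg (by positivity), Real.norm_of_nonneg (by positivity)]
  exact Real.rpow_le_rpow_of_exponent_le (by exact_mod_cast hn) hab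

theorem rpow_mul_rpow_eventuallyEq (a b : ℝ) :
    (fun n : ℕ => (n : ℝ) ^ a * (n : ℝ) ^ b) =ᶠ[atTop] fun n => (n : ℝ) ^ (a + b) :=
  eventually_atTop.mpr ⟨1, fun n hn => (Real.rpow_add (by exact_mod_cast hn) a b).symm⟩

theorem HasPowerLaw.isBigO (hf : HasPowerLaw f c a) :
    f =O[atTop] fun n => (n : ℝ) ^ (-a) := by
  have remainder := IsBigO.trans hf (rpow_isBigO_rpow_of_le (by linarith : -(a + 1) ≤ -a))
  simpa only [sub_add_cancel] using
    remainder.add ((isBigO_refl _ _).const_mul_left c)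

theorem HasPowerLaw.mul (hf : HasPowerLaw f c a) (hg : HasPowerLaw g c' a') :
    HasPowerLaw (fun n => f n * g n) (c * c') (a + a') := by
  have left := (IsBigO.mul hf hg.isBigO).trans_eventuallyEq (rpow_mul_rpow_eventuallyEq _ _)
  have right := (((isBigO_refl (fun n : ℕ => (n : ℝ) ^ (-a)) atTop).const_mul_left c).mul
    hg).trans_eventuallyEq (rpow_mul_rpow_eventuallyEq _ _)
  rw [show -(a + 1) + -a' = -(a + a' + 1) by ring] at left
  rw [show -a + -(a' + 1) = -(a + a' + 1) by ring] at right
  refine (left.add right).congr' ?_ .rfl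
  filter_upwards [rpow_mul_rpow_eventuallyEq (-a) (-a')] with n hn
  rw [neg_add, ← hn]
  ring

theorem HasPowerLaw.prod {ι : Type*} {s : Finset ι} {f : ι → ℕ → ℝ} {c : ι → ℝ}
    (hf : ∀ i ∈ s, HasPowerLaw (f i) (c i) a) :
    HasPowerLaw (fun n => ∏ i ∈ s, f i n) (∏ i ∈ s, c i) (#s * a) := by
  induction s using Finset.induction_on with
  | empty => simpa [HasPowerLaw] using isBigO_zero _ _
  | insert i s hi ih =>
    rw [forall_mem_insert] at hf
    simp only [prod_insert hi, card_insert_of_notMem hi, Nat.cast_succ, add_one_mul]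
    rw [add_comm]
    exact hf.1.mul (ih hf.2)

theorem hasPowerLaw_integral_one_add_mul_exp {κ : ℝ} (hκ : 0 < κ) :
    HasPowerLaw (fun n => ∫ z, (1 + z) * Real.exp (-(n * (κ * (1 - z)))) ∂measureT)
      √(2 * Real.pi / κ) (1 / 2) := by
  refine (integral_one_add_mul_exp_isBigO hκ).congr (fun n => ?_) fun n => by norm_num
  rw [← div_div, Real.sqrt_div' _ n.cast_nonneg, Real.rpow_neg n.cast_nonneg, ← Real.sqrt_eq_rpow,
    div_eq_mul_inv _ √(n : ℝ)]

theorem hasPowerLaw_integral_one_sub_sq_mul_exp {κ : ℝ} (hκ : 0 < κ) :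
    HasPowerLaw (fun n => ∫ z, (1 - z ^ 2) * Real.exp (-(n * (κ * (1 - z)))) ∂measureT)
      (√(Real.pi / (2 * κ)) / κ) (3 / 2) := by
  refine (integral_one_sub_sq_mul_exp_isBigO hκ).congr (fun n => ?_) fun n => by norm_num
  have rpow_eq : (n : ℝ) ^ (-(3 / 2) : ℝ) = (√(n : ℝ) * n)⁻¹ := by
    rw [Real.rpow_neg n.cast_nonneg, Real.sqrt_eq_rpow,
      ← Real.rpow_add_one' n.cast_nonneg (by norm_num)]
    norm_num
  rw [← div_div Real.pi, Real.sqrt_div' _ n.cast_nonneg, rpow_eq]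
  ring

theorem exists_abs_sub_le_of_isBigO
    (h : (fun n => f n - g n) =O[atTop] fun n => (n : ℝ)⁻¹ * g n) :
    ∃ C : ℝ, ∀ᶠ n : ℕ in atTop, |f n - g n| ≤ C / n * |g n| := by
  obtain ⟨C, hC⟩ := h.bound
  refine ⟨C, hC.mono fun n hn => hn.trans_eq ?_⟩
  rw [norm_mul, norm_inv, Real.norm_natCast, Real.norm_eq_abs, div_eq_mul_inv, mul_assoc]

end PowerLaw

section NegativeDrift

open Asymptotics MeasureTheory Polynomial.Chebyshev

variable {d : ℕ} {S : Finset (Fin (d + 1) → ℤ)} {w : (Fin (d + 1) → ℤ) → ℝ} {r χ : ℝ}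

theorem isNegativeDriftModel_sqrt
    (hstep : ∀ i ∈ S, ∀ j, i j = -1 ∨ i j = 0 ∨ i j = 1) (hw : ∀ i ∈ S, 0 < w i)
    (hsym : ∀ k : Fin d, SymmetricAxis (d + 1) S w k.castSucc) (hfwd : ∀ k, ∃ i ∈ S, i k = 1)
    (hdrift : ∑ i ∈ S with i (Fin.last d) = 1, w i < ∑ i ∈ S with i (Fin.last d) = -1, w i) :
    IsNegativeDriftModel S w
      √((∑ i ∈ S with i (Fin.last d) = -1, w i) / ∑ i ∈ S with i (Fin.last d) = 1, w i) := by
  have forward_pos : 0 < ∑ i ∈ S with i (Fin.last d) = 1, w i := by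
    obtain ⟨i, hi, hi1⟩ := hfwd (Fin.last d)
    exact sum_pos (fun i hi => hw i (mem_filter.mp hi).1) ⟨i, mem_filter.mpr ⟨hi, hi1⟩⟩
  have one_lt_ratio := (one_lt_div forward_pos).mpr hdrift
  refine ⟨hstep, hw, hsym, hfwd, Real.lt_sqrt_of_sq_lt (by rwa [one_pow]), ?_⟩
  rw [Real.sq_sqrt (one_pos.trans one_lt_ratio).le, div_mul_cancel₀ _ forward_pos.ne']

theorem foldedCoeff_one (e : ℤ) :
    foldedCoeff S w e 1 = ∑ i ∈ S with i (Fin.last d) = e, w i := by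
  simp [foldedCoeff]

variable (S w r) in
/-- The counterpart of `decayRate` for the last axis. -/
def lastDecayRate : ℝ := 2 * (r * foldedCoeff S w 1 1 / SAt d S w r)

variable (S w r) in
/-- The factor of `Cconst d S w r` and `Cconst d S w (-r)` that does not depend on the sign of the
critical point, in the form in which it arises from the one-dimensional Laplace integrals. -/
def laplaceConst : ℝ :=
  (Real.pi ^ d)⁻¹ * (2 / Real.pi * (√(Real.pi / (2 * lastDecayRate S w r)) / lastDecayRate S w r *
    ∏ k, √(2 * Real.pi / decayRate S w r k)))

variable (r χ) in
/-- The sum of the contributions `1 / (1 - 1 / (±r)) ^ 2` of the two critical points, the one of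
`-r` being weighted by `χ`. -/
def criticalSum (n : ℕ) : ℝ := 1 / (1 - 1 / r) ^ 2 + χ * (-1) ^ n / (1 + 1 / r) ^ 2

namespace IsNegativeDriftModel

theorem lastDecayRate_pos (h : IsNegativeDriftModel S w r) : 0 < lastDecayRate S w r :=
  mul_pos two_pos h.isNearCritical.p₀_pos

theorem prod_sqrt_decayRate_sq (h : IsNegativeDriftModel S w r) :
    (∏ k, √(2 * Real.pi / decayRate S w r k)) ^ 2 =
      (Real.pi * SAt d S w r) ^ d / ∏ k, BkAt d S w k r := by
  have factor (k : Fin d) : √(2 * Real.pi / decayRate S w r k) ^ 2 =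
      Real.pi * SAt d S w r / BkAt d S w k r := by
    have rate_pos := h.decayRate_pos k
    have T_ne_zero := h.SAt_pos.ne'
    rw [Real.sq_sqrt (by positivity), decayRate]
    field_simp
  simp only [← prod_pow, factor, prod_div_distrib, prod_const, card_univ, Fintype.card_fin]

theorem laplaceConst_pos (h : IsNegativeDriftModel S w r) : 0 < laplaceConst S w r := by
  have last_pos := h.lastDecayRate_pos
  have prod_pos : 0 < ∏ k, √(2 * Real.pi / decayRate S w r k) := prod_pos fun k _ =>
    Real.sqrt_pos.mpr (div_pos Real.two_pi_pos (h.decayRate_pos k))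
  unfold laplaceConst
  positivity

theorem laplaceConst_eq (h : IsNegativeDriftModel S w r) :
    laplaceConst S w r =
      SAt d S w r / (2 * Real.pi ^ (((d : ℝ) + 1) / 2) * r * foldedCoeff S w 1 1) *
        √(SAt d S w r ^ (d + 1) / (r * (∏ k, BkAt d S w k r) * foldedCoeff S w 1 1)) := by
  have r_pos := h.r_pos
  have T_pos := h.SAt_pos
  have B_pos := h.foldedCoeff_one_one_pos
  have Bk_pos : 0 < ∏ k, BkAt d S w k r := prod_pos fun k _ => h.BkAt_pos k
  have pi_sq : (Real.pi ^ (((d : ℝ) + 1) / 2)) ^ 2 = Real.pi ^ (d + 1) := by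
    rw [← Real.rpow_natCast, ← Real.rpow_mul Real.pi_pos.le, ← Real.rpow_natCast]
    push_cast
    ring_nf
  have last_pos := h.lastDecayRate_pos
  rw [← pow_left_inj₀ h.laplaceConst_pos.le (by positivity) two_ne_zero]
  simp only [laplaceConst, mul_pow, div_pow, h.prod_sqrt_decayRate_sq, pi_sq, inv_pow]
  rw [Real.sq_sqrt (by positivity), Real.sq_sqrt (by positivity), lastDecayRate]
  field_simp
  ring

theorem Cconst_eq (h : IsNegativeDriftModel S w r) :
    Cconst d S w r = laplaceConst S w r / (1 - 1 / r) ^ 2 := by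
  have := h.r_pos.ne'
  rw [Cconst, h.critical, h.laplaceConst_eq, foldedCoeff_one]
  field_simp

theorem zpow_neg_of_forall_ne_zero (h : IsNegativeDriftModel S w r)
    (hQ : {i ∈ S | i (Fin.last d) = 0} = ∅) {i : Fin (d + 1) → ℤ} (hi : i ∈ S) :
    (-r) ^ i (Fin.last d) = -r ^ i (Fin.last d) := by
  obtain hj | hj | hj := h.small_step i hi (Fin.last d)
  · simp [hj, inv_neg]
  · exact absurd hj (filter_eq_empty_iff.mp hQ hi)
  · simp [hj]

theorem SAt_neg (h : IsNegativeDriftModel S w r) (hQ : {i ∈ S | i (Fin.last d) = 0} = ∅) :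
    SAt d S w (-r) = -SAt d S w r := by
  rw [SAt, SAt, ← sum_neg_distrib]
  exact sum_congr rfl fun i hi => by rw [h.zpow_neg_of_forall_ne_zero hQ hi, mul_neg]

theorem BkAt_neg (h : IsNegativeDriftModel S w r) (hQ : {i ∈ S | i (Fin.last d) = 0} = ∅)
    (k : Fin d) : BkAt d S w k (-r) = -BkAt d S w k r := by
  rw [BkAt, BkAt, ← sum_neg_distrib]
  exact sum_congr rfl fun i hi => by
    rw [h.zpow_neg_of_forall_ne_zero hQ (mem_filter.mp hi).1, mul_neg]

theorem Cconst_neg_eq (h : IsNegativeDriftModel S w r)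
    (hQ : {i ∈ S | i (Fin.last d) = 0} = ∅) :
    Cconst d S w (-r) = laplaceConst S w r / (1 + 1 / r) ^ 2 := by
  have r_ne_zero := h.r_pos.ne'
  have radicand_even : (-SAt d S w r) ^ (d + 1) /
      (-r * (∏ k, -BkAt d S w k r) * foldedCoeff S w 1 1) =
        SAt d S w r ^ (d + 1) / (r * (∏ k, BkAt d S w k r) * foldedCoeff S w 1 1) := by
    have sign_ne_zero : ((-1) ^ (d + 1) : ℝ) ≠ 0 := pow_ne_zero _ (by norm_num)
    rw [neg_pow, prod_neg, card_univ, Fintype.card_fin,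
      ← mul_div_mul_left (SAt d S w r ^ (d + 1)) _ sign_ne_zero]
    congr 1
    ring
  rw [Cconst, h.critical, h.laplaceConst_eq, ← foldedCoeff_one, h.SAt_neg hQ]
  simp only [h.BkAt_neg hQ, radicand_even]
  rw [div_neg, sub_neg_eq_add]
  field_simp

theorem hasPowerLaw_integral_mul_prod (h : IsNegativeDriftModel S w r) :
    HasPowerLaw
      (fun n => (∫ z, (1 - z ^ 2) * Real.exp (-(n * (lastDecayRate S w r * (1 - z)))) ∂measureT) *
        ∏ k, ∫ z, (1 + z) * Real.exp (-(n * (decayRate S w r k * (1 - z)))) ∂measureT)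
      (√(Real.pi / (2 * lastDecayRate S w r)) / lastDecayRate S w r *
        ∏ k, √(2 * Real.pi / decayRate S w r k)) (((d : ℝ) + 1) / 2 + 1) := by
  have law := (hasPowerLaw_integral_one_sub_sq_mul_exp h.lastDecayRate_pos).mul
    (.prod (s := univ) fun k _ => hasPowerLaw_integral_one_add_mul_exp (h.decayRate_pos k))
  rw [card_univ, Fintype.card_fin] at law
  convert law using 1
  ring

theorem criticalSum_isBigO_one (r χ : ℝ) : criticalSum r χ =O[atTop] fun _ => (1 : ℝ) := by
  refine .add (isBigO_const_const _ one_ne_zero _)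
    (.of_bound |χ / (1 + 1 / r) ^ 2| (.of_forall fun n => ?_))
  rw [norm_one, mul_one, norm_div, norm_mul, norm_pow, norm_neg, norm_one, one_pow, mul_one,
    ← norm_div, Real.norm_eq_abs]

theorem one_isBigO_criticalSum (h : IsNegativeDriftModel S w r) (hχ : χ ∈ Set.Icc 0 1) :
    (fun _ => (1 : ℝ)) =O[atTop] criticalSum r χ := by
  have inv_pos : 0 < 1 / r := one_div_pos.mpr h.r_pos
  have inv_lt_one : 1 / r < 1 := (div_lt_one h.r_pos).mpr h.one_lt
  have gap_pos : 0 < 1 / (1 - 1 / r) ^ 2 - 1 / (1 + 1 / r) ^ 2 := by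
    refine sub_pos.mpr (one_div_lt_one_div_of_lt (pow_pos (by linarith) 2) ?_)
    exact pow_lt_pow_left₀ (by linarith) (by linarith) two_ne_zero
  refine .of_bound (1 / (1 - 1 / r) ^ 2 - 1 / (1 + 1 / r) ^ 2)⁻¹ (.of_forall fun n => ?_)
  rw [norm_one, ← div_eq_inv_mul, one_le_div gap_pos]
  refine .trans ?_ (Real.le_norm_self _)
  rw [criticalSum, sub_eq_add_neg, ← neg_div]
  gcongr
  rcases neg_one_pow_eq_or ℝ n with sign | sign <;> rw [sign] <;> linarith [hχ.1, hχ.2]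

theorem walkWeight_div_sub_isBigO (h : IsNegativeDriftModel S w r)
    (hχ : χ = 1 ∧ {i ∈ S | i (Fin.last d) = 0} = ∅ ∨
      χ = 0 ∧ {i ∈ S | i (Fin.last d) = 0}.Nonempty) :
    (fun n : ℕ => walkWeight (d + 1) S w n / SAt d S w r ^ n -
      laplaceConst S w r * criticalSum r χ n * (n : ℝ) ^ (-((d + 1) / 2 + 1) : ℝ)) =O[atTop]
        fun n => (n : ℝ) ^ (-((d + 1) / 2 + 1 + 1) : ℝ) := by
  have reduction := h.walkWeight_sub_isBigO hχ
  rw [show -(5 / 2 + d * (1 / 2) : ℝ) = -((d + 1) / 2 + 1 + 1) by ring] at reduction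
  have laplace := ((criticalSum_isBigO_one r χ).mul h.hasPowerLaw_integral_mul_prod).const_mul_left
    (2 / Real.pi)
  simp only [one_mul] at laplace
  refine ((reduction.add laplace).const_mul_left (Real.pi ^ d)⁻¹).congr_left fun n => ?_
  rw [halfLineAmplitude, ← criticalSum, ← lastDecayRate, laplaceConst]
  field_simp
  ring

theorem walkWeight_isBigO (h : IsNegativeDriftModel S w r)
    (hχ : χ = 1 ∧ {i ∈ S | i (Fin.last d) = 0} = ∅ ∨
      χ = 0 ∧ {i ∈ S | i (Fin.last d) = 0}.Nonempty) :
    (fun n : ℕ => walkWeight (d + 1) S w n -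
      SAt d S w r ^ n * (n : ℝ) ^ (-((d : ℝ) + 1) / 2 - 1) *
        (laplaceConst S w r * criticalSum r χ n)) =O[atTop]
      fun n => (n : ℝ)⁻¹ * (SAt d S w r ^ n * (n : ℝ) ^ (-((d : ℝ) + 1) / 2 - 1) *
        (laplaceConst S w r * criticalSum r χ n)) := by
  have χ_mem : χ ∈ Set.Icc 0 1 := by
    rcases hχ with ⟨rfl, -⟩ | ⟨rfl, -⟩ <;> simp
  have T_ne_zero := h.SAt_pos.ne'
  have sum_bound := (h.one_isBigO_criticalSum χ_mem).const_mul_right h.laplaceConst_pos.ne'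
  have order_eq : (fun n : ℕ => (n : ℝ) ^ (-((d + 1) / 2 + 1 + 1) : ℝ)) =ᶠ[atTop]
      fun n => (n : ℝ)⁻¹ * (n : ℝ) ^ (-((d : ℝ) + 1) / 2 - 1) := by
    filter_upwards [rpow_mul_rpow_eventuallyEq (-1) (-((d : ℝ) + 1) / 2 - 1)] with n hn
    rw [← Real.rpow_neg_one, hn]
    ring_nf
  have relative := ((h.walkWeight_div_sub_isBigO hχ).trans_eventuallyEq order_eq).mul sum_bound
  refine ((isBigO_refl (fun n : ℕ => SAt d S w r ^ n) atTop).mul relative).congr (fun n => ?_)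
    fun n => by ring
  rw [show -((d + 1) / 2 + 1 : ℝ) = -((d : ℝ) + 1) / 2 - 1 by ring]
  field_simp

theorem walkWeight_isBigO_of_nonempty (h : IsNegativeDriftModel S w r)
    (hQ : {i ∈ S | i (Fin.last d) = 0}.Nonempty) :
    (fun n : ℕ => walkWeight (d + 1) S w n -
      SAt d S w r ^ n * (n : ℝ) ^ (-((d : ℝ) + 1) / 2 - 1) * Cconst d S w r) =O[atTop]
      fun n => (n : ℝ)⁻¹ *
        (SAt d S w r ^ n * (n : ℝ) ^ (-((d : ℝ) + 1) / 2 - 1) * Cconst d S w r) := by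
  simpa [h.Cconst_eq, criticalSum, div_eq_mul_inv] using h.walkWeight_isBigO (.inr ⟨rfl, hQ⟩)

theorem walkWeight_isBigO_of_empty (h : IsNegativeDriftModel S w r)
    (hQ : {i ∈ S | i (Fin.last d) = 0} = ∅) :
    (fun n : ℕ => walkWeight (d + 1) S w n - (n : ℝ) ^ (-((d : ℝ) + 1) / 2 - 1) *
      (SAt d S w r ^ n * Cconst d S w r + SAt d S w (-r) ^ n * Cconst d S w (-r))) =O[atTop]
      fun n => (n : ℝ)⁻¹ * ((n : ℝ) ^ (-((d : ℝ) + 1) / 2 - 1) *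
        (SAt d S w r ^ n * Cconst d S w r + SAt d S w (-r) ^ n * Cconst d S w (-r))) := by
  have main_eq (n : ℕ) : SAt d S w r ^ n * (n : ℝ) ^ (-((d : ℝ) + 1) / 2 - 1) *
      (laplaceConst S w r * criticalSum r 1 n) = (n : ℝ) ^ (-((d : ℝ) + 1) / 2 - 1) *
        (SAt d S w r ^ n * Cconst d S w r + SAt d S w (-r) ^ n * Cconst d S w (-r)) := by
    rw [h.Cconst_eq, h.Cconst_neg_eq hQ, h.SAt_neg hQ, neg_pow (SAt d S w r), criticalSum]
    ring
  simpa only [main_eq] using h.walkWeight_isBigO (.inl ⟨rfl, hQ⟩)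

end IsNegativeDriftModel

end NegativeDrift

/-- Negative drift asymptotics (Melczer–Wilson) for a mostly symmetric step set in
dimension `d+1` (symmetric over the first `d` axes), with negative drift
`B(1) - A(1) < 0`, where `ρ = √(A(1)/B(1))`.  If `Q ≠ 0` then
`s_n = S(1,…,1,ρ)^n n^{-(d+1)/2-1} C_ρ (1 + O(1/n))`, and if `Q = 0` then
`s_n = n^{-(d+1)/2-1} [S(1,…,1,ρ)^n C_ρ + S(1,…,1,-ρ)^n C_{-ρ}] (1 + O(1/n))`. -/
theorem mostly_symmetric_negative_drift_asymptotics
    (d : ℕ) (S : Finset (Fin (d + 1) → ℤ)) (w : (Fin (d + 1) → ℤ) → ℝ)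
    (hstep : ∀ i ∈ S, (∀ j, i j = -1 ∨ i j = 0 ∨ i j = 1) ∧ i ≠ 0)
    (hw : ∀ i ∈ S, 0 < w i)
    (hsym : ∀ k : Fin d, SymmetricAxis (d + 1) S w (Fin.castSucc k))
    (hfwd : ∀ k : Fin (d + 1), ∃ i ∈ S, i k = 1)
    (hbwd : ∀ k : Fin (d + 1), ∃ i ∈ S, i k = -1)
    (hdrift : (∑ i ∈ S.filter fun i => i (Fin.last d) = 1, w i)
        < ∑ i ∈ S.filter fun i => i (Fin.last d) = -1, w i) :
    (((S.filter fun i => i (Fin.last d) = 0).Nonempty) →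
      ∃ C : ℝ, ∀ᶠ n : ℕ in atTop,
        |walkWeight (d + 1) S w n -
            SAt d S w (Real.sqrt ((∑ i ∈ S.filter fun i => i (Fin.last d) = -1, w i) /
                  ∑ i ∈ S.filter fun i => i (Fin.last d) = 1, w i)) ^ n *
              (n : ℝ) ^ (-((d : ℝ) + 1) / 2 - 1) *
              Cconst d S w (Real.sqrt ((∑ i ∈ S.filter fun i => i (Fin.last d) = -1, w i) /
                  ∑ i ∈ S.filter fun i => i (Fin.last d) = 1, w i))|
          ≤ C / n *
            |SAt d S w (Real.sqrt ((∑ i ∈ S.filter fun i => i (Fin.last d) = -1, w i) /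
                  ∑ i ∈ S.filter fun i => i (Fin.last d) = 1, w i)) ^ n *
              (n : ℝ) ^ (-((d : ℝ) + 1) / 2 - 1) *
              Cconst d S w (Real.sqrt ((∑ i ∈ S.filter fun i => i (Fin.last d) = -1, w i) /
                  ∑ i ∈ S.filter fun i => i (Fin.last d) = 1, w i))|) ∧
    (((S.filter fun i => i (Fin.last d) = 0) = ∅) →
      ∃ C : ℝ, ∀ᶠ n : ℕ in atTop,
        |walkWeight (d + 1) S w n -
            (n : ℝ) ^ (-((d : ℝ) + 1) / 2 - 1) *
              (SAt d S w (Real.sqrt ((∑ i ∈ S.filter fun i => i (Fin.last d) = -1, w i) /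
                    ∑ i ∈ S.filter fun i => i (Fin.last d) = 1, w i)) ^ n *
                Cconst d S w (Real.sqrt ((∑ i ∈ S.filter fun i => i (Fin.last d) = -1, w i) /
                    ∑ i ∈ S.filter fun i => i (Fin.last d) = 1, w i)) +
              SAt d S w (-Real.sqrt ((∑ i ∈ S.filter fun i => i (Fin.last d) = -1, w i) /
                    ∑ i ∈ S.filter fun i => i (Fin.last d) = 1, w i)) ^ n *
                Cconst d S w (-Real.sqrt ((∑ i ∈ S.filter fun i => i (Fin.last d) = -1, w i) /
                    ∑ i ∈ S.filter fun i => i (Fin.last d) = 1, w i)))|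
          ≤ C / n *
            |(n : ℝ) ^ (-((d : ℝ) + 1) / 2 - 1) *
              (SAt d S w (Real.sqrt ((∑ i ∈ S.filter fun i => i (Fin.last d) = -1, w i) /
                    ∑ i ∈ S.filter fun i => i (Fin.last d) = 1, w i)) ^ n *
                Cconst d S w (Real.sqrt ((∑ i ∈ S.filter fun i => i (Fin.last d) = -1, w i) /
                    ∑ i ∈ S.filter fun i => i (Fin.last d) = 1, w i)) +
              SAt d S w (-Real.sqrt ((∑ i ∈ S.filter fun i => i (Fin.last d) = -1, w i) /
                    ∑ i ∈ S.filter fun i => i (Fin.last d) = 1, w i)) ^ n *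
                Cconst d S w (-Real.sqrt ((∑ i ∈ S.filter fun i => i (Fin.last d) = -1, w i) /
                    ∑ i ∈ S.filter fun i => i (Fin.last d) = 1, w i)))|) := by
  have model := isNegativeDriftModel_sqrt (fun i hi => (hstep i hi).1) hw hsym hfwd hdrift
  exact ⟨fun hQ => exists_abs_sub_le_of_isBigO (model.walkWeight_isBigO_of_nonempty hQ),
    fun hQ => exists_abs_sub_le_of_isBigO (model.walkWeight_isBigO_of_empty hQ)⟩

end
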